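/- arXiv:1909.00272 — 5 statements merged into one kernel-verified Lean document; each statement's English description precedes it below -/
import Mathlib

section
/- Let n ≥ 1 and let G be a subgroup of GL(n, ℂ) such that there exists a natural number r with the property that every element of G has order at most r (equivalently, g^(r!) = 1 for all g ∈ G). Then G is finite. -/
open Matrix

lemma aux_root {n : ℕ} (hn : 1 ≤ n) (u : Matrix (Fin n) (Fin n) ℂ) (N : ℕ) (hu : u ^ N = 1)
    (z : ℂ) (hz : z ∈ u.charpoly.roots) : z ^ N = 1 := by
  have : Nonempty (Fin n) := ⟨⟨0, hn⟩⟩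
  have h1 : z ∈ spectrum ℂ u := by
    rw [Matrix.mem_spectrum_iff_isRoot_charpoly]
    exact Polynomial.isRoot_of_mem_roots hz
  have h2 := spectrum.pow_mem_pow u N h1
  rw [hu, spectrum.one_eq] at h2
  simpa using h2

lemma aux_card {n : ℕ} (u : Matrix (Fin n) (Fin n) ℂ) : u.charpoly.roots.card = n := by
  have := (IsAlgClosed.splits u.charpoly).natDegree_eq_card_roots
  rw [← this, Matrix.charpoly_natDegree_eq_dim, Fintype.card_fin]

lemma aux_multiset (s : Multiset ℂ) (h : ∀ z ∈ s, ‖z‖ = 1) (hs : s.sum = s.card) :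
    ∀ z ∈ s, z = 1 := by
  have key : ∀ t : Multiset ℂ, (∀ z ∈ t, ‖z‖ = 1) → t.sum.re ≤ t.card ∧
      (t.sum.re = t.card → ∀ z ∈ t, z = 1) := by
    intro t
    induction t using Multiset.induction_on with
    | empty => simp
    | cons a t ih =>
      intro ht
      obtain ⟨h1, h2⟩ := ih (fun z hz => ht z (Multiset.mem_cons_of_mem hz))
      have ha := ht a (Multiset.mem_cons_self a t)
      have har : a.re ≤ 1 := ha ▸ Complex.re_le_norm a
      simp only [Multiset.sum_cons, Complex.add_re, Multiset.card_cons, Nat.cast_add, Nat.cast_one]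
      refine ⟨by linarith, fun he z hz => ?_⟩
      rcases Multiset.mem_cons.1 hz with rfl | hz
      · have hre : z.re = 1 := by linarith
        have hsq : z.re * z.re + z.im * z.im = 1 := by
          rw [← Complex.normSq_apply, Complex.normSq_eq_norm_sq, ha]; norm_num
        apply Complex.ext
        · simpa using hre
        · rw [hre] at hsq
          simpa using hsq
      · exact h2 (by linarith) z hz
  exact (key s h).2 (by rw [hs]; simp)

lemma aux_one {n : ℕ} (hn : 1 ≤ n) (u : Matrix (Fin n) (Fin n) ℂ) (N : ℕ) (hN : N ≠ 0)
    (hu : u ^ N = 1) (ht : u.trace = n) : u = 1 := by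
  have hroots : ∀ z ∈ u.charpoly.roots, z = 1 := by
    apply aux_multiset
    · intro z hz
      exact Complex.norm_eq_one_of_pow_eq_one (aux_root hn u N hu z hz) hN
    · rw [aux_card, ← ht, Matrix.trace_eq_sum_roots_charpoly]
  have hch : u.charpoly = (Polynomial.X - Polynomial.C 1) ^ n := by
    rw [(IsAlgClosed.splits u.charpoly).eq_prod_roots_of_monic u.charpoly_monic,
      Multiset.eq_replicate.2 ⟨aux_card u, hroots⟩]
    simp
  have hnil : IsNilpotent (u - 1) := by
    refine ⟨n, ?_⟩
    have := Matrix.aeval_self_charpoly u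
    rw [hch] at this
    simpa using this
  have hgeom : (∑ i ∈ Finset.range N, u ^ i) * (u - 1) = 0 := by
    rw [geom_sum_mul, hu, sub_self]
  have hunit : IsUnit (∑ i ∈ Finset.range N, u ^ i) := by
    have hd : (∑ i ∈ Finset.range N, u ^ i)
        = (N : Matrix (Fin n) (Fin n) ℂ) +
          (∑ i ∈ Finset.range N, ∑ j ∈ Finset.range i, u ^ j) * (u - 1) := by
      rw [Finset.sum_mul]
      simp_rw [geom_sum_mul]
      simp
    have hc : Commute (∑ i ∈ Finset.range N, ∑ j ∈ Finset.range i, u ^ j) (u - 1) := by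
      apply Commute.sum_left
      intro i _
      apply Commute.sum_left
      intro j _
      exact ((Commute.refl u).pow_left j).sub_right (Commute.one_right _)
    have hNu : IsUnit (N : Matrix (Fin n) (Fin n) ℂ) := by
      have : IsUnit (N : ℂ) := (Nat.cast_ne_zero.2 hN).isUnit
      simpa using this.map (algebraMap ℂ (Matrix (Fin n) (Fin n) ℂ))
    rw [hd]
    exact (hc.isNilpotent_mul_left hnil).isUnit_add_left_of_commute hNu (Nat.cast_commute N _).symm
  exact sub_eq_zero.1 ((hunit.mul_right_eq_zero).1 hgeom)

lemma aux_finite (n N : ℕ) (hn : 1 ≤ n) (hN : N ≠ 0) :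
    {t : ℂ | ∃ u : Matrix (Fin n) (Fin n) ℂ, u ^ N = 1 ∧ u.trace = t}.Finite := by
  classical
  let S : Finset ℂ := (Polynomial.X ^ N - 1 : Polynomial ℂ).roots.toFinset
  refine ((S.sym n).image (fun m : Sym ℂ n => (m : Multiset ℂ).sum)).finite_toSet.subset ?_
  rintro t ⟨u, hu, rfl⟩
  simp only [Finset.coe_image, Set.mem_image, Finset.mem_coe]
  refine ⟨Sym.mk u.charpoly.roots (aux_card u), ?_, ?_⟩
  · rw [Finset.mem_sym_iff]
    intro z hz
    have := aux_root hn u N hu z hz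
    have h0 : (Polynomial.X ^ N - 1 : Polynomial ℂ) ≠ 0 :=
      (Polynomial.monic_X_pow_sub_C 1 hN).ne_zero
    simp [S, h0, this]
  · exact (Matrix.trace_eq_sum_roots_charpoly u).symm

/-- **Burnside's theorem.** A subgroup of `GL(n, ℂ)` of bounded exponent (every
element has order at most `r`, equivalently `g ^ r! = 1` for all `g`) is finite. -/
theorem burnside_theorem {n : ℕ} (hn : 1 ≤ n) (G : Subgroup (GL (Fin n) ℂ))
    (r : ℕ) (hexp : ∀ g ∈ G, g ^ Nat.factorial r = 1) :
    Finite G := by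
  classical
  have hN : Nat.factorial r ≠ 0 := Nat.factorial_ne_zero r
  have hpow : ∀ g ∈ G, (g : Matrix (Fin n) (Fin n) ℂ) ^ Nat.factorial r = 1 := by
    intro g hg
    rw [← Units.val_pow_eq_pow_val, hexp g hg, Units.val_one]
  let M : Set (Matrix (Fin n) (Fin n) ℂ) := (fun g : GL (Fin n) ℂ => g.val) '' (G : Set _)
  obtain ⟨T, hTM, hT⟩ := (Submodule.fg_span_iff_fg_span_finset_subset (R := ℂ) M).1
    (IsNoetherian.noetherian _)
  let V := {t : ℂ | ∃ u : Matrix (Fin n) (Fin n) ℂ, u ^ Nat.factorial r = 1 ∧ u.trace = t}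
  have : Finite V := aux_finite n _ hn hN
  let f : G → (T → V) := fun g t => ⟨(g.1.val * t.1).trace, by
    obtain ⟨k, hk, hkt⟩ := hTM t.2
    refine ⟨_, ?_, rfl⟩
    rw [← hkt]
    exact hpow _ (G.mul_mem g.2 hk)⟩
  refine Finite.of_injective f ?_
  intro g h hgh
  have h1 : ∀ x ∈ Submodule.span ℂ M, (g.1.val * x).trace = (h.1.val * x).trace := by
    intro x hx
    rw [hT] at hx
    induction hx using Submodule.span_induction with
    | mem x hx => exact congrArg Subtype.val (congrFun hgh ⟨x, hx⟩)
    | zero => simp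
    | add x y _ _ hx hy => simp [mul_add, hx, hy]
    | smul a x _ hx => simp [hx]
  have h2 := h1 (h⁻¹ : G).1.val (Submodule.subset_span ⟨_, (h⁻¹ : G).2, rfl⟩)
  have h3 : (g * h⁻¹ : G).1.val = 1 := by
    apply aux_one hn _ _ hN (hpow _ (g * h⁻¹ : G).2)
    have : ((h * h⁻¹ : G).1.val).trace = (n : ℂ) := by simp
    rw [← this]
    exact h2
  exact mul_inv_eq_one.1 (Subtype.ext (Units.ext h3))
end

section
/- Let d ≥ 1 and let f : ℝ^d → ℝ^d be a map with f(0) = 0 which is continuously differentiable on an open neighborhood of 0, whose derivative at 0 is the identity linear map. Suppose there exist an integer n ≥ 1 and an open neighborhood V of 0 such that the n-th iterate f^[n] equals the identity on V. Then there exists an open neighborhood W of 0 on which f equals the identity. -/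
/-- **Reeb stability (weak form).** If `f : ℝᵈ → ℝᵈ` fixes `0`, is `C¹` on a
neighborhood of `0`, has derivative the identity at `0`, and some iterate
`f^[n]` (`n ≥ 1`) is the identity near `0`, then `f` itself is the identity on a
neighborhood of `0`. -/
theorem reeb_stability {d : ℕ} (hd : 1 ≤ d)
    (f : EuclideanSpace ℝ (Fin d) → EuclideanSpace ℝ (Fin d))
    (hf0 : f 0 = 0)
    (U : Set (EuclideanSpace ℝ (Fin d))) (hUopen : IsOpen U) (hU0 : 0 ∈ U)
    (hC1 : ContDiffOn ℝ 1 f U)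
    (hderiv : fderiv ℝ f 0 = ContinuousLinearMap.id ℝ (EuclideanSpace ℝ (Fin d)))
    (n : ℕ) (hn : 1 ≤ n)
    (V : Set (EuclideanSpace ℝ (Fin d))) (hVopen : IsOpen V) (hV0 : 0 ∈ V)
    (hiter : ∀ y ∈ V, f^[n] y = y) :
    ∃ W : Set (EuclideanSpace ℝ (Fin d)), IsOpen W ∧ 0 ∈ W ∧ ∀ y ∈ W, f y = y := by
  have hcd : ContDiffAt ℝ 1 f 0 := hC1.contDiffAt (hUopen.mem_nhds hU0)
  have hs : HasStrictFDerivAt f (1 : EuclideanSpace ℝ (Fin d) →L[ℝ] EuclideanSpace ℝ (Fin d)) 0 := by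
    have h := hcd.hasStrictFDerivAt one_ne_zero
    rw [hderiv] at h
    exact h
  have hg : HasStrictFDerivAt (fun y => ∑ k ∈ Finset.range n, f^[k] y)
      (∑ k ∈ Finset.range n,
        (1 : EuclideanSpace ℝ (Fin d) →L[ℝ] EuclideanSpace ℝ (Fin d)) ^ k) 0 :=
    HasStrictFDerivAt.fun_sum fun k _ => hs.iterate hf0 k
  have ho := hg.isLittleO
  have hc : Filter.Tendsto f (nhds 0) (nhds 0) := by
    have := hcd.continuousAt.tendsto
    rwa [hf0] at this
  have ht : Filter.Tendsto (fun y => (f y, y)) (nhds 0)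
      (nhds ((0 : EuclideanSpace ℝ (Fin d)), (0 : EuclideanSpace ℝ (Fin d)))) := by
    rw [nhds_prod_eq]
    exact hc.prodMk Filter.tendsto_id
  have hb := (ho.comp_tendsto ht).bound (show (0 : ℝ) < 1 / 2 by norm_num)
  have key : ∀ᶠ y in nhds (0 : EuclideanSpace ℝ (Fin d)), f y = y := by
    filter_upwards [hb, hVopen.mem_nhds hV0] with y hy hyV
    have e : (∑ k ∈ Finset.range n, f^[k] (f y)) - ∑ k ∈ Finset.range n, f^[k] y = 0 := by
      rw [← Finset.sum_sub_distrib]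
      have := Finset.sum_range_sub (fun k => f^[k] y) n
      simp only [Function.iterate_succ_apply, Function.iterate_zero_apply] at this
      rw [this, hiter y hyV, sub_self]
    simp only [Function.comp_apply, e, one_pow, Finset.sum_const, Finset.card_range, zero_sub,
      norm_neg, ContinuousLinearMap.smul_apply, ContinuousLinearMap.one_apply] at hy
    rw [← Nat.cast_smul_eq_nsmul ℝ, norm_smul, Real.norm_natCast] at hy
    have hn' : (1 : ℝ) ≤ n := by exact_mod_cast hn
    have h0 : ‖f y - y‖ = 0 := by nlinarith [norm_nonneg (f y - y)]
    exact sub_eq_zero.mp (norm_eq_zero.mp h0)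
  obtain ⟨W, hW, hWo, hW0⟩ := eventually_nhds_iff.mp key
  exact ⟨W, hWo, hW0, hW⟩
end

section
/- Let G be an infinite group in which every element has order a power of 2 (i.e., for each g ∈ G there exists k with g^(2^k) = 1). Then there exists an element g ∈ G of order exactly 2 whose centralizer C(g) = {h ∈ G : h*g = g*h} is infinite. -/
theorem aux_pow_order_two {G : Type*} [Group G]
    (h2 : ∀ g : G, ∃ k : ℕ, g ^ 2 ^ k = 1) (g : G) (hg : g ≠ 1) :
    ∃ n : ℕ, orderOf (g ^ n) = 2 := by
  obtain ⟨k, hk⟩ := h2 g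
  obtain ⟨m, -, hm⟩ := (Nat.dvd_prime_pow Nat.prime_two).1 (orderOf_dvd_of_pow_eq_one hk)
  have hm0 : m ≠ 0 := by
    rintro rfl
    exact hg (orderOf_eq_one_iff.1 (by simpa using hm))
  have h0 : orderOf g ≠ 0 := by rw [hm]; positivity
  have hd : 2 ∣ orderOf g := by rw [hm]; exact dvd_pow_self 2 hm0
  exact ⟨_, orderOf_pow_orderOf_div h0 hd⟩

/-- **Proposition 2.2.** An infinite 2-group (every element has order a power of 2)
contains an involution whose centralizer is infinite. -/
theorem infinite_two_group_exists_involution_infinite_centralizer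
    {G : Type*} [Group G] [Infinite G]
    (h2 : ∀ g : G, ∃ k : ℕ, g ^ 2 ^ k = 1) :
    ∃ g : G, orderOf g = 2 ∧ {h : G | h * g = g * h}.Infinite := by
  by_contra hcon
  have hfin : ∀ g : G, orderOf g = 2 → {h : G | h * g = g * h}.Finite := by
    intro g hg
    by_contra h
    exact hcon ⟨g, hg, h⟩
  obtain ⟨g, hg⟩ := exists_ne (1 : G)
  obtain ⟨n, hn⟩ := aux_pow_order_two h2 g hg
  generalize g ^ n = i at hn
  have hi : i * i = 1 := by rw [← pow_two, ← hn, pow_orderOf_eq_one]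
  have key : ∀ j : G, j * j = 1 → ∃ z : G, orderOf z = 2 ∧ z * i = i * z ∧ j * z = z * j := by
    intro j hj
    have hi' : i⁻¹ = i := inv_eq_of_mul_eq_one_left hi
    have hj' : j⁻¹ = j := inv_eq_of_mul_eq_one_left hj
    by_cases hij : i * j = 1
    · have : j = i := by rw [← hi']; exact (inv_eq_of_mul_eq_one_right hij).symm
      exact ⟨i, hn, rfl, by rw [this]⟩
    · obtain ⟨m, hm⟩ := aux_pow_order_two h2 (i * j) hij
      have hzz : (i * j) ^ m * (i * j) ^ m = 1 := by rw [← pow_two, ← hm, pow_orderOf_eq_one]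
      have hz : ((i * j) ^ m)⁻¹ = (i * j) ^ m := inv_eq_of_mul_eq_one_left hzz
      have hz2 : (j * i) ^ m = (i * j) ^ m := by
        rw [← hz, ← inv_pow, mul_inv_rev, hi', hj']
      have h1 : SemiconjBy i (j * i) (i * j) := by simp [SemiconjBy, mul_assoc]
      have h3 : SemiconjBy j (i * j) (j * i) := by simp [SemiconjBy, mul_assoc]
      have h1 := h1.pow_right m
      have h3 := h3.pow_right m
      rw [hz2] at h1 h3
      exact ⟨_, hm, h1.eq.symm, h3.eq⟩
  have hinv : {j : G | j * j = 1}.Finite := by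
    have hU : (⋃ z ∈ {z : G | z * i = i * z ∧ orderOf z = 2}, {h : G | h * z = z * h}).Finite := by
      apply Set.Finite.biUnion
      · exact (hfin i hn).subset fun z hz => hz.1
      · exact fun z hz => hfin z hz.2
    refine hU.subset fun j hj => ?_
    obtain ⟨z, hz, hzi, hjz⟩ := key j hj
    exact Set.mem_biUnion (show z ∈ {z : G | z * i = i * z ∧ orderOf z = 2} from ⟨hzi, hz⟩) hjz
  have huniv : (Set.univ : Set G).Finite := by
    refine Set.Finite.of_finite_fibers (fun x : G => x * i * x⁻¹) (hinv.subset ?_) ?_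
    · rintro _ ⟨x, -, rfl⟩
      change x * i * x⁻¹ * (x * i * x⁻¹) = 1
      have : x * i * x⁻¹ * (x * i * x⁻¹) = x * (i * i) * x⁻¹ := by group
      rw [this, hi]; simp
    · rintro _ ⟨x, -, rfl⟩
      refine ((hfin i hn).image (fun h => x * h)).subset ?_
      rintro y ⟨-, hy⟩
      have hy : y * i * y⁻¹ = x * i * x⁻¹ := hy
      refine ⟨x⁻¹ * y, ?_, by simp⟩
      change x⁻¹ * y * i = i * (x⁻¹ * y)
      have : y * i = x * i * x⁻¹ * y := by rw [← hy]; group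
      rw [mul_assoc, this]; group
  exact Set.infinite_univ huniv
end

section
/- Let p be a prime and let M be a nonempty compact topological manifold. Then there exists a natural number k such that there is no free action of the group (ℤ/pℤ)^k on M by homeomorphisms; that is, there is no group homomorphism ρ from (ℤ/pℤ)^k to the group of self-homeomorphisms of M with the property that ρ(g)(x) ≠ x for every g ≠ 0 and every x ∈ M. -/
/-- The group of self-homeomorphisms of a topological space, under composition
(`f * g = f ∘ g`). -/
instance homeomorphGroup {X : Type*} [TopologicalSpace X] : Group (X ≃ₜ X) where
  mul f g := g.trans f
  one := Homeomorph.refl X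
  inv f := f.symm
  mul_assoc _ _ _ := Homeomorph.ext fun _ => rfl
  one_mul _ := Homeomorph.ext fun _ => rfl
  mul_one _ := Homeomorph.ext fun _ => rfl
  inv_mul_cancel f := Homeomorph.ext f.symm_apply_apply

namespace FA
open Finsupp
open scoped Topology

abbrev V (F : Type*) [CommRing F] (M : Type*) := List M →₀ F

section chains
variable {F : Type*} [CommRing F] {M N : Type*}

noncomputable def consL (x : M) : V F M →ₗ[F] V F M := Finsupp.lmapDomain F F (List.cons x)

lemma consL_single (x : M) (l : List M) (a : F) :
    consL x (single l a) = single (x :: l) a := by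
  simp [consL]

noncomputable def dl : List M → V F M
  | [] => 0
  | x :: l => single l 1 - consL x (dl l)

noncomputable def d : V F M →ₗ[F] V F M := Finsupp.linearCombination F dl

lemma d_single (l : List M) : d (single l (1:F)) = dl l := by simp [d]

lemma d_nil : d (single ([] : List M) (1:F)) = 0 := by simp [d_single, dl]

/-- induction principle: linear maps agreeing on lists -/
lemma hom_ext {W : Type*} [AddCommGroup W] [Module F W] {f g : V F M →ₗ[F] W}
    (h : ∀ l, f (single l 1) = g (single l 1)) : f = g := by
  apply Finsupp.lhom_ext'
  intro l
  ext
  simpa using h l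

lemma d_consL (x : M) (v : V F M) : d (consL x v) = v - consL x (d v) := by
  have : d ∘ₗ consL x = LinearMap.id - consL x ∘ₗ (d : V F M →ₗ[F] V F M) := by
    apply hom_ext
    intro l
    simp [consL_single, d_single, dl]
  exact LinearMap.congr_fun this v

lemma d_d (v : V F M) : d (d v) = 0 := by
  have : d ∘ₗ d = (0 : V F M →ₗ[F] V F M) := by
    apply hom_ext
    intro l
    induction l with
    | nil => simp [d_nil]
    | cons x l ih =>
      rw [← consL_single]
      simp only [LinearMap.comp_apply, LinearMap.zero_apply] at ih ⊢
      rw [d_consL, map_sub, d_consL, ih]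
      simp
  exact LinearMap.congr_fun this v

noncomputable def mapL (f : M → N) : V F M →ₗ[F] V F N := Finsupp.lmapDomain F F (List.map f)

lemma mapL_single (f : M → N) (l : List M) (a : F) :
    mapL f (single l a) = single (l.map f) a := by
  simp [mapL]

lemma mapL_consL (f : M → N) (x : M) (v : V F M) :
    mapL f (consL x v) = consL (f x) (mapL f v) := by
  have : mapL f ∘ₗ consL x = consL (f x) ∘ₗ (mapL f : V F M →ₗ[F] V F N) := by
    apply hom_ext
    intro l
    simp [consL_single, mapL_single]
  exact LinearMap.congr_fun this v

lemma d_mapL (f : M → N) (v : V F M) : d (mapL f v) = mapL f (d v) := by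
  have : d ∘ₗ mapL f = mapL f ∘ₗ (d : V F M →ₗ[F] V F M) := by
    apply hom_ext
    intro l
    induction l with
    | nil => simp [mapL_single, d_nil]
    | cons x l ih =>
      simp only [LinearMap.comp_apply] at ih ⊢
      rw [← consL_single, mapL_consL, d_consL, ih, d_consL, map_sub, mapL_consL]
  exact LinearMap.congr_fun this v

lemma mapL_mapL {K : Type*} (f : M → N) (g : N → K) (v : V F M) :
    mapL g (mapL f v) = mapL (g ∘ f) v := by
  have : mapL g ∘ₗ mapL f = (mapL (g ∘ f) : V F M →ₗ[F] V F K) := by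
    apply hom_ext
    intro l
    simp [mapL_single]
  exact LinearMap.congr_fun this v

lemma mapL_id (v : V F M) : mapL (id : M → M) v = v := by
  have : mapL id = (LinearMap.id : V F M →ₗ[F] V F M) := by
    apply hom_ext
    intro l
    simp [mapL_single]
  exact LinearMap.congr_fun this v

noncomputable def Pl (f g : M → N) : List M → V F N
  | [] => 0
  | x :: l => single (f x :: g x :: l.map g) 1 - consL (f x) (Pl f g l)

noncomputable def P (f g : M → N) : V F M →ₗ[F] V F N := Finsupp.linearCombination F (Pl f g)

lemma P_single (f g : M → N) (l : List M) : P f g (single l (1:F)) = Pl f g l := by simp [P]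

lemma P_consL (f g : M → N) (x : M) (v : V F M) :
    P f g (consL x v) = consL (f x) (consL (g x) (mapL g v)) - consL (f x) (P f g v) := by
  have : P f g ∘ₗ consL x = consL (f x) ∘ₗ consL (g x) ∘ₗ mapL g
      - consL (f x) ∘ₗ (P f g : V F M →ₗ[F] V F N) := by
    apply hom_ext
    intro l
    simp [consL_single, P_single, Pl, mapL_single]
  exact LinearMap.congr_fun this v

lemma prism (f g : M → N) (v : V F M) :
    d (P f g v) = mapL g v - mapL f v - P f g (d v) := by
  have : d ∘ₗ P f g = mapL g - mapL f - P f g ∘ₗ (d : V F M →ₗ[F] V F M) := by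
    apply hom_ext
    intro l
    induction l with
    | nil => simp [P_single, Pl, d_nil, mapL_single]
    | cons x l ih =>
      simp only [LinearMap.comp_apply, LinearMap.sub_apply] at ih ⊢
      rw [← consL_single, P_consL, map_sub, d_consL, d_consL, d_consL, ih, d_consL]
      simp only [map_sub, P_consL, mapL_consL, d_mapL]
      abel
  exact LinearMap.congr_fun this v

/-- chains supported on lists with property `p` -/
noncomputable abbrev Sp (p : List M → Prop) : Submodule F (V F M) := Finsupp.supported F F {l | p l}

lemma single_mem_Sp {p : List M → Prop} {l : List M} (h : p l) (a : F) :
    single l a ∈ (Sp p : Submodule F (V F M)) := Finsupp.single_mem_supported F a h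

lemma Sp_mono {p q : List M → Prop} (h : ∀ l, p l → q l) :
    (Sp p : Submodule F (V F M)) ≤ Sp q := Finsupp.supported_mono (fun l hl => h l hl)

/-- a linear map sends Sp p into S as soon as it does so on lists -/
lemma map_Sp {W : Type*} [AddCommGroup W] [Module F W] {p : List M → Prop} (f : V F M →ₗ[F] W)
    (S : Submodule F W)
    (h : ∀ l, p l → f (single l 1) ∈ S) {v : V F M} (hv : v ∈ (Sp p : Submodule F (V F M))) :
    f v ∈ S := by
  have : Sp p ≤ S.comap f := by
    rw [Sp, Finsupp.supported_eq_span_single, Submodule.span_le]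
    rintro _ ⟨l, hl, rfl⟩
    exact h l hl
  exact this hv

lemma eq_on_Sp {W : Type*} [AddCommGroup W] [Module F W] {p : List M → Prop} (f g : V F M →ₗ[F] W)
    (h : ∀ l, p l → f (single l 1) = g (single l 1)) {v : V F M}
    (hv : v ∈ (Sp p : Submodule F (V F M))) : f v = g v := by
  have := map_Sp (f - g) ⊥ (p := p) (by intro l hl; simp [h l hl]) hv
  simpa [sub_eq_zero] using this

lemma dl_mem (l : List M) : (dl l : V F M) ∈ (Sp (fun l' => l'.Sublist l ∧ l'.length + 1 = l.length) :
    Submodule F (V F M)) := by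
  induction l with
  | nil => simp [dl]
  | cons x l ih =>
    apply Submodule.sub_mem
    · exact single_mem_Sp (by simp) _
    · refine map_Sp _ _ ?_ ih
      rintro l' ⟨h1, h2⟩
      rw [consL_single]
      exact single_mem_Sp ⟨h1.cons_cons x, by simp [h2]⟩ _

lemma d_mem {p : List M → Prop} (hp : ∀ l l', l'.Sublist l → p l → p l') {v : V F M}
    (hv : v ∈ (Sp p : Submodule F (V F M))) : d v ∈ (Sp p : Submodule F (V F M)) := by
  refine map_Sp _ _ ?_ hv
  intro l hl
  rw [d_single]
  exact Sp_mono (fun l' h => hp _ _ h.1 hl) (dl_mem l)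

lemma mapL_mem {p : List M → Prop} {q : List N → Prop} (f : M → N) (h : ∀ l, p l → q (l.map f))
    {v : V F M} (hv : v ∈ (Sp p : Submodule F (V F M))) :
    mapL f v ∈ (Sp q : Submodule F (V F N)) := by
  refine map_Sp _ _ ?_ hv
  intro l hl
  rw [mapL_single]
  exact single_mem_Sp (h l hl) _

lemma Pl_mem (f g : M → N) (l : List M) : (Pl f g l : V F N) ∈
    (Sp (fun l' => (∀ y ∈ l', ∃ x ∈ l, y = f x ∨ y = g x) ∧ l'.length = l.length + 1) :
    Submodule F (V F N)) := by
  induction l with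
  | nil => simp [Pl]
  | cons x l ih =>
    apply Submodule.sub_mem
    · refine single_mem_Sp ⟨?_, by simp⟩ _
      intro y hy
      simp only [List.mem_cons, List.mem_map] at hy
      rcases hy with h | h | ⟨a, ha, h⟩
      · exact ⟨x, by simp, Or.inl h⟩
      · exact ⟨x, by simp, Or.inr h⟩
      · exact ⟨a, by simp [ha], Or.inr h.symm⟩
    · refine map_Sp _ _ ?_ ih
      rintro l' ⟨h1, h2⟩
      rw [consL_single]
      refine single_mem_Sp ⟨?_, by simp [h2]⟩ _
      intro y hy
      rcases List.mem_cons.1 hy with h | h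
      · exact ⟨x, by simp, Or.inl h⟩
      · obtain ⟨a, ha, h⟩ := h1 y h
        exact ⟨a, by simp [ha], h⟩

lemma P_mem {p : List M → Prop} {q : List N → Prop} (f g : M → N)
    (h : ∀ l, p l → ∀ l', (∀ y ∈ l', ∃ x ∈ l, y = f x ∨ y = g x) → l'.length = l.length + 1 → q l')
    {v : V F M} (hv : v ∈ (Sp p : Submodule F (V F M))) :
    P f g v ∈ (Sp q : Submodule F (V F N)) := by
  refine map_Sp _ _ ?_ hv
  intro l hl
  rw [P_single]
  exact Sp_mono (fun l' h' => h l hl l' h'.1 h'.2) (Pl_mem f g l)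

end chains

end FA

namespace FA
open Finsupp
open scoped Topology

def Q {M : Type*} [Dist M] (S : Set M) (m : ℕ) (ε : ℝ) (l : List M) : Prop :=
  (∀ x ∈ l, x ∈ S) ∧ l.length ≤ m ∧ ∀ x ∈ l, ∀ y ∈ l, dist x y < ε

lemma Q_sub {M : Type*} [Dist M] {S : Set M} {m : ℕ} {ε : ℝ} (l l' : List M) (h : l'.Sublist l)
    (hl : Q S m ε l) : Q S m ε l' :=
  ⟨fun x hx => hl.1 x (h.subset hx), h.length_le.trans hl.2.1,
    fun x hx y hy => hl.2.2 x (h.subset hx) y (h.subset hy)⟩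

lemma Q_mono {M : Type*} [Dist M] {S S' : Set M} {m m' : ℕ} {ε ε' : ℝ} (hS : S ⊆ S') (hm : m ≤ m')
    (hε : ε ≤ ε') (l : List M) (hl : Q S m ε l) : Q S' m' ε' l :=
  ⟨fun x hx => hS (hl.1 x hx), hl.2.1.trans hm, fun x hx y hy => (hl.2.2 x hx y hy).trans_le hε⟩

section cvx
variable {F : Type*} [CommRing F] {E : Type*} [NormedAddCommGroup E] [NormedSpace ℝ E]

lemma cvx {K : Set E} (hK : Convex ℝ K) {c : E} (hc : c ∈ K) {m : ℕ} {δ : ℝ} (hδ : 0 < δ)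
    {z : V F E} (hz : z ∈ (Sp (Q K m δ) : Submodule F (V F E))) (hdz : d z = 0) :
    ∃ w ∈ (Sp (Q K (m+1) δ) : Submodule F (V F E)), d w = z := by
  classical
  set f : ℝ → E → E := fun s x => AffineMap.lineMap c x s with hf
  have hfK : ∀ s ∈ Set.Icc (0:ℝ) 1, ∀ x ∈ K, f s x ∈ K := fun s hs x hx =>
    hK.lineMap_mem hc hx hs
  have hfd : ∀ s ∈ Set.Icc (0:ℝ) 1, ∀ x y, dist x y < δ → dist (f s x) (f s y) < δ := by
    intro s hs x y hxy
    refine lt_of_le_of_lt ?_ hxy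
    have : f s x - f s y = s • (x - y) := by
      simp only [hf, AffineMap.lineMap_apply, vsub_eq_sub, vadd_eq_add]
      module
    rw [dist_eq_norm, this, norm_smul, dist_eq_norm, Real.norm_of_nonneg hs.1]
    exact mul_le_of_le_one_left (norm_nonneg _) hs.2
  have hcont : ∀ x, Continuous (fun s => f s x) := fun x => AffineMap.lineMap_continuous
  set R : ℝ → ℝ → Prop := fun s s' =>
    ∃ w ∈ (Sp (Q K (m+1) δ) : Submodule F (V F E)), d w = mapL (f s') z - mapL (f s) z with hR
  have key : R 0 1 := by
    apply (isPreconnected_Icc (a := (0:ℝ)) (b := 1)).induction₂ R ?_ ?_ ?_ (by simp) (by simp)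
    · intro s hs
      -- for s' near s
      have h1 : ∀ l ∈ z.support, ∀ x ∈ l, ∀ y ∈ l, ∀ᶠ s' in 𝓝[Set.Icc 0 1] s,
          dist (f s x) (f s' y) < δ := by
        intro l hl x hx y hy
        have hl' : Q K m δ l := hz hl
        have : Filter.Tendsto (fun s' => dist (f s x) (f s' y)) (𝓝[Set.Icc 0 1] s)
            (𝓝 (dist (f s x) (f s y))) :=
          ((continuous_const.dist (hcont y)).tendsto s).mono_left nhdsWithin_le_nhds
        exact this.eventually_lt_const (hfd s hs x y (hl'.2.2 x hx y hy))
      have h2 : ∀ᶠ s' in 𝓝[Set.Icc 0 1] s, ∀ l ∈ z.support, ∀ x ∈ l.toFinset, ∀ y ∈ l.toFinset,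
          dist (f s x) (f s' y) < δ := by
        rw [Filter.eventually_all_finset]
        intro l hl
        rw [Filter.eventually_all_finset]
        intro x hx
        rw [Filter.eventually_all_finset]
        intro y hy
        exact h1 l hl x (by simpa using hx) y (by simpa using hy)
      filter_upwards [h2, self_mem_nhdsWithin] with s' h hs'
      refine ⟨P (f s) (f s') z, ?_, ?_⟩
      · have hz' : z ∈ (Sp (fun l => l ∈ z.support) : Submodule F (V F E)) := by
          intro l hl; exact hl
        refine P_mem _ _ ?_ hz'
        intro l hl l' h1 h2
        have hl' : Q K m δ l := hz hl
        refine ⟨?_, by have := hl'.2.1; omega, ?_⟩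
        · intro y hy
          obtain ⟨x, hx, rfl | rfl⟩ := h1 y hy
          · exact hfK s hs x (hl'.1 x hx)
          · exact hfK s' hs' x (hl'.1 x hx)
        · intro y hy y' hy'
          obtain ⟨x, hx, rfl | rfl⟩ := h1 y hy <;> obtain ⟨x', hx', rfl | rfl⟩ := h1 y' hy'
          · exact hfd s hs _ _ (hl'.2.2 x hx x' hx')
          · exact h l hl x (by simpa using hx) x' (by simpa using hx')
          · rw [dist_comm]; exact h l hl x' (by simpa using hx') x (by simpa using hx)
          · exact hfd s' hs' _ _ (hl'.2.2 x hx x' hx')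
      · rw [prism, hdz]; simp
    · intro a b c _ _ _ ⟨w, hw, h⟩ ⟨w', hw', h'⟩
      exact ⟨w + w', Submodule.add_mem _ hw hw', by rw [map_add, h, h']; abel⟩
    · intro a b _ _ ⟨w, hw, h⟩
      exact ⟨-w, Submodule.neg_mem _ hw, by rw [map_neg, h]; abel⟩
  obtain ⟨w, hw, h⟩ := key
  have h1 : mapL (f 1) z = z := by
    have : f 1 = id := by ext x; simp [hf]
    rw [this, mapL_id]
  refine ⟨w + consL c (mapL (f 0) z), Submodule.add_mem _ hw ?_, ?_⟩
  · refine map_Sp (p := Q K m δ) (consL c ∘ₗ mapL (f 0)) _ ?_ hz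
    intro l hl
    rw [LinearMap.comp_apply, mapL_single, consL_single]
    have hc0 : ∀ x ∈ c :: l.map (f 0), x = c := by
      intro x hx
      simp only [List.mem_cons, List.mem_map] at hx
      rcases hx with rfl | ⟨a, _, rfl⟩
      · rfl
      · simp [hf]
    refine single_mem_Sp ⟨?_, by simpa using hl.2.1, ?_⟩ _
    · intro x hx; rw [hc0 x hx]; exact hc
    · intro x hx y hy; rw [hc0 x hx, hc0 y hy]; simpa using hδ
  · rw [map_add, h, d_consL, d_mapL, hdz, h1]; simp

end cvx

section loc
variable {F : Type*} [CommRing F] {M : Type*} [MetricSpace M]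

lemma loc (E : Type*) [NormedAddCommGroup E] [NormedSpace ℝ E]
    [ProperSpace E] [ChartedSpace E M] (x0 : M) {r : ℝ} (hr : 0 < r) : ∃ N : Set M, IsOpen N ∧ x0 ∈ N ∧ N ⊆ Metric.ball x0 r ∧
    ∀ ε > 0, ∃ δ > 0, ∀ (m : ℕ) (z : V F M), z ∈ (Sp (Q N m δ) : Submodule F (V F M)) → d z = 0 →
      ∃ w ∈ (Sp (Q N (m+1) ε) : Submodule F (V F M)), d w = z := by
  set e := chartAt E x0 with he
  have hx0 : x0 ∈ e.source := mem_chart_source E x0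
  have h1 : e.target ∩ e.symm ⁻¹' (Metric.ball x0 r) ∈ 𝓝 (e x0) := by
    apply Filter.inter_mem (e.open_target.mem_nhds (e.map_source hx0))
    apply (e.symm.continuousAt (e.map_source hx0)).preimage_mem_nhds
    rw [e.left_inv hx0]
    exact Metric.ball_mem_nhds _ hr
  obtain ⟨s, hs, hsub⟩ := Metric.nhds_basis_closedBall.mem_iff.1 h1
  set C := Metric.closedBall (e x0) s
  have hC : IsCompact C := isCompact_closedBall _ _
  have hcs : ContinuousOn e.symm C := e.continuousOn_symm.mono (fun y hy => (hsub hy).1)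
  have hC' : IsCompact (e.symm '' C) := hC.image_of_continuousOn hcs
  have hce : ContinuousOn e (e.symm '' C) := e.continuousOn.mono (by
    rintro _ ⟨y, hy, rfl⟩
    exact e.map_target (hsub hy).1)
  have u1 := hC.uniformContinuousOn_of_continuous hcs
  have u2 := hC'.uniformContinuousOn_of_continuous hce
  rw [Metric.uniformContinuousOn_iff] at u1 u2
  set N := e.source ∩ e ⁻¹' Metric.ball (e x0) s
  have hNC : ∀ x ∈ N, e x ∈ C := fun x hx => Metric.ball_subset_closedBall hx.2
  have hNC' : ∀ x ∈ N, x ∈ e.symm '' C := fun x hx => ⟨e x, hNC x hx, e.left_inv hx.1⟩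
  refine ⟨N, e.continuousOn.isOpen_inter_preimage e.open_source Metric.isOpen_ball,
    ⟨hx0, Metric.mem_ball_self hs⟩, ?_, ?_⟩
  · intro x hx
    have := (hsub (hNC x hx)).2
    rwa [Set.mem_preimage, e.left_inv hx.1] at this
  intro ε hε
  obtain ⟨δ1, hδ1, H1⟩ := u1 ε hε
  obtain ⟨δ, hδ, H2⟩ := u2 δ1 hδ1
  refine ⟨δ, hδ, fun m z hz hdz => ?_⟩
  have hz1 : mapL e z ∈ (Sp (Q (Metric.ball (e x0) s) m δ1) : Submodule F (V F E)) := by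
    refine mapL_mem e ?_ hz
    intro l hl
    refine ⟨?_, by simpa using hl.2.1, ?_⟩
    · intro y hy
      obtain ⟨x, hx, rfl⟩ := List.mem_map.1 hy
      exact (hl.1 x hx).2
    · intro y hy y' hy'
      obtain ⟨x, hx, rfl⟩ := List.mem_map.1 hy
      obtain ⟨x', hx', rfl⟩ := List.mem_map.1 hy'
      exact H2 x (hNC' x (hl.1 x hx)) x' (hNC' x' (hl.1 x' hx')) (hl.2.2 x hx x' hx')
  obtain ⟨w, hw, hdw⟩ := cvx (convex_ball (e x0) s) (Metric.mem_ball_self hs) hδ1 hz1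
    (by rw [d_mapL, hdz, map_zero])
  refine ⟨mapL e.symm w, ?_, ?_⟩
  · refine mapL_mem e.symm ?_ hw
    intro l hl
    refine ⟨?_, by simpa using hl.2.1, ?_⟩
    · intro y hy
      obtain ⟨x, hx, rfl⟩ := List.mem_map.1 hy
      have hxb := hl.1 x hx
      have hxt := (hsub (Metric.ball_subset_closedBall hxb)).1
      exact ⟨e.map_target hxt, by rwa [Set.mem_preimage, e.right_inv hxt]⟩
    · intro y hy y' hy'
      obtain ⟨x, hx, rfl⟩ := List.mem_map.1 hy
      obtain ⟨x', hx', rfl⟩ := List.mem_map.1 hy'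
      exact H1 x (Metric.ball_subset_closedBall (hl.1 x hx)) x'
        (Metric.ball_subset_closedBall (hl.1 x' hx')) (hl.2.2 x hx x' hx')
  · rw [d_mapL, hdw, mapL_mapL]
    have := eq_on_Sp (mapL (e.symm ∘ e)) LinearMap.id (p := Q N m δ) (F := F) ?_ hz
    · simpa using this
    intro l hl
    rw [mapL_single, LinearMap.id_apply]
    congr 1
    conv_rhs => rw [← List.map_id l]
    apply List.map_congr_left
    intro x hx
    exact e.left_inv (hl.1 x hx).1

lemma locU (E : Type*) [NormedAddCommGroup E] [NormedSpace ℝ E]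
    [ProperSpace E] [ChartedSpace E M] [CompactSpace M] {R : ℝ} (hR : 0 < R) : ∃ r > 0, ∀ ε > 0, ∃ δ > 0, ∀ (x : M) (m : ℕ) (z : V F M),
    z ∈ (Sp (Q (Metric.ball x r) m δ) : Submodule F (V F M)) → d z = 0 →
      ∃ w ∈ (Sp (Q (Metric.ball x R) (m+1) ε) : Submodule F (V F M)), d w = z := by
  choose N hNo hN hNb hNd using fun x0 : M => loc (F := F) E x0 (half_pos hR)
  obtain ⟨t, ht⟩ := isCompact_univ.elim_finite_subcover N hNo
    (fun x _ => Set.mem_iUnion.2 ⟨x, hN x⟩)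
  obtain ⟨r, hr, hrt⟩ := lebesgue_number_lemma_of_metric (isCompact_univ (X := M))
    (c := fun i : t => N i) (fun i => hNo i) (by
      intro x hx
      obtain ⟨i, hi, h⟩ := Set.mem_iUnion₂.1 (ht hx)
      exact Set.mem_iUnion.2 ⟨⟨i, hi⟩, h⟩)
  refine ⟨r, hr, fun ε hε => ?_⟩
  choose δ hδ hδd using fun i => hNd i ε hε
  obtain ⟨δ0, hδ0, hle⟩ : ∃ δ0 > 0, ∀ i ∈ t, δ0 ≤ δ i := by
    have : ∀ᶠ a in 𝓝[>] (0:ℝ), ∀ i ∈ t, a ≤ δ i := by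
      rw [Filter.eventually_all_finset]
      intro i _
      exact nhdsWithin_le_nhds (eventually_le_nhds (hδ i))
    obtain ⟨a, h1, h2⟩ := (this.and self_mem_nhdsWithin).exists
    exact ⟨a, h2, h1⟩
  refine ⟨δ0, hδ0, fun x m z hz hdz => ?_⟩
  obtain ⟨⟨i, hi⟩, hxi⟩ := hrt x trivial
  obtain ⟨w, hw, hdw⟩ := hδd i m z (Sp_mono (Q_mono hxi le_rfl (hle i hi)) hz) hdz
  refine ⟨w, Sp_mono (Q_mono ?_ le_rfl le_rfl) hw, hdw⟩
  intro y hy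
  have h1 := hNb i hy
  have h2 := hNb i (hxi (Metric.mem_ball_self hr))
  rw [Metric.mem_ball] at *
  linarith [dist_triangle_right y x i]

end loc
end FA

namespace FA
open Finsupp
open scoped Topology
section sub
variable {F : Type*} [CommRing F] {M : Type*} [MetricSpace M]

lemma subd (E : Type*) [NormedAddCommGroup E] [NormedSpace ℝ E]
    [ProperSpace E] [ChartedSpace E M] [CompactSpace M] (m : ℕ) : ∀ R > 0, ∃ η > 0, ∀ ε > 0,
    ∃ δ > 0, ∃ Θ : V F M →ₗ[F] V F M, ∀ l : List M, Q Set.univ m η l →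
      (Θ (single l 1) ∈ (Sp (Q {y | ∀ x ∈ l, dist y x < R} l.length ε) : Submodule F (V F M))) ∧
      d (Θ (single l 1)) = Θ (dl l) ∧ (Q Set.univ m δ l → Θ (single l 1) = single l 1) := by
  classical
  induction m with
  | zero =>
    intro R hR
    refine ⟨1, one_pos, fun ε hε => ⟨1, one_pos, LinearMap.id, ?_⟩⟩
    intro l hl
    have : l = [] := List.eq_nil_of_length_eq_zero (Nat.le_zero.1 hl.2.1)
    subst this
    refine ⟨single_mem_Sp ⟨by simp, by simp, by simp⟩ _, ?_, fun _ => rfl⟩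
    simp [d_nil, dl]
  | succ m ih =>
    intro R hR
    obtain ⟨r, hr, hloc⟩ := locU (F := F) (M := M) E (half_pos hR)
    obtain ⟨η0, hη0, H⟩ := ih (min (r/2) R) (lt_min (half_pos hr) hR)
    refine ⟨min η0 (min (r/2) (R/2)), by positivity, fun ε hε => ?_⟩
    obtain ⟨δ1, hδ1, hloc⟩ := hloc ε hε
    obtain ⟨δ0, hδ0, Θ, HΘ⟩ := H (min δ1 ε) (lt_min hδ1 hε)
    set η := min η0 (min (r/2) (R/2)) with hη
    have hηη0 : η ≤ η0 := min_le_left _ _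
    have hηr : η ≤ r/2 := (min_le_right _ _).trans (min_le_left _ _)
    have hηR : η ≤ R/2 := (min_le_right _ _).trans (min_le_right _ _)
    set δ := min δ0 ε with hδ
    -- facts about boundary of lists of length m+1
    have hdl : ∀ l : List M, l.length = m + 1 → Q Set.univ (m+1) η l →
        ∀ l', (l'.Sublist l ∧ l'.length + 1 = l.length) → Q Set.univ m η0 l' := by
      intro l hlm hl l' ⟨h1, h2⟩
      exact ⟨fun _ _ => trivial, by omega, fun x hx y hy =>
        (hl.2.2 x (h1.subset hx) y (h1.subset hy)).trans_le hηη0⟩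
    have hcyc : ∀ l : List M, l.length = m + 1 → Q Set.univ (m+1) η l → d (Θ (dl l)) = 0 := by
      intro l hlm hl
      have : d (Θ (dl l)) = Θ (d (dl l)) := by
        refine eq_on_Sp (d ∘ₗ Θ) (Θ ∘ₗ d) ?_ (dl_mem l)
        intro l' h
        rw [LinearMap.comp_apply, LinearMap.comp_apply, d_single]
        exact (HΘ l' (hdl l hlm hl l' h)).2.1
      rw [this, ← d_single, d_d, map_zero]
    have hex : ∀ l : List M, ∃ w : V F M, l.length = m + 1 → Q Set.univ (m+1) η l →
        ¬ Q Set.univ (m+1) δ l →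
        w ∈ (Sp (Q {y | ∀ x ∈ l, dist y x < R} l.length ε) : Submodule F (V F M)) ∧
        d w = Θ (dl l) := by
      intro l
      by_cases h : l.length = m + 1 ∧ Q Set.univ (m+1) η l ∧ ¬ Q Set.univ (m+1) δ l
      swap
      · exact ⟨0, fun a b c => (h ⟨a, b, c⟩).elim⟩
      obtain ⟨hlm, hl, hnl⟩ := h
      -- m ≥ 1
      have hm : 1 ≤ m := by
        by_contra hm
        apply hnl
        have h1 : l.length = 1 := by omega
        obtain ⟨a, rfl⟩ := List.length_eq_one_iff.1 h1
        refine ⟨by simp, by simp, ?_⟩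
        intro x hx y hy
        simp only [List.mem_singleton] at hx hy
        subst hx; subst hy
        rw [dist_self]
        exact lt_min hδ0 hε
      obtain ⟨a, ha⟩ : ∃ a, a ∈ l := by
        cases l with
        | nil => simp at hlm
        | cons a l => exact ⟨a, by simp⟩
      have hz : Θ (dl l) ∈ (Sp (Q (Metric.ball a r) m δ1) : Submodule F (V F M)) := by
        refine map_Sp Θ _ ?_ (dl_mem l)
        intro l' h
        refine Sp_mono ?_ (HΘ l' (hdl l hlm hl l' h)).1
        intro l'' h''
        obtain ⟨b, hb⟩ : ∃ b, b ∈ l' := by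
          cases l' with
          | nil => simp at h; omega
          | cons a l => exact ⟨a, by simp⟩
        refine ⟨?_, by have := h''.2.1; omega, fun x hx y hy =>
          (h''.2.2 x hx y hy).trans_le (min_le_left _ _)⟩
        intro y hy
        have h3 := h''.1 y hy b hb
        have h4 := hl.2.2 b (h.1.subset hb) a ha
        have h5 : min (r/2) R ≤ r/2 := min_le_left _ _
        rw [Metric.mem_ball]
        linarith [dist_triangle y b a]
      obtain ⟨w, hw, hdw⟩ := hloc a m _ hz (hcyc l hlm hl)
      refine ⟨w, fun _ _ _ => ⟨Sp_mono (Q_mono ?_ (by omega) le_rfl) hw, hdw⟩⟩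
      intro y hy x hx
      rw [Metric.mem_ball] at hy
      have h4 := hl.2.2 a ha x hx
      linarith [dist_triangle y a x]
    choose w hw using hex
    let Θ' : V F M →ₗ[F] V F M := Finsupp.linearCombination F (fun l =>
      if l.length = m + 1 then (if Q Set.univ (m+1) δ l then single l 1 else w l)
      else Θ (single l 1))
    have hΘ' : ∀ l, Θ' (single l 1) =
      if l.length = m + 1 then (if Q Set.univ (m+1) δ l then single l 1 else w l)
      else Θ (single l 1) := by intro l; simp [Θ']
    have hΘ'd : ∀ l : List M, l.length ≤ m + 1 → Θ' (dl l) = Θ (dl l) := by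
      intro l hl
      refine eq_on_Sp Θ' Θ ?_ (dl_mem l)
      intro l' h
      rw [hΘ', if_neg (by have := h.2; omega)]
    refine ⟨δ, lt_min hδ0 hε, Θ', ?_⟩
    intro l hl
    rw [hΘ'd l hl.2.1, hΘ' l]
    by_cases hlm : l.length = m + 1
    · rw [if_pos hlm]
      by_cases hld : Q Set.univ (m+1) δ l
      · rw [if_pos hld]
        have hQ : Q {y | ∀ x ∈ l, dist y x < R} l.length ε l := by
          refine ⟨?_, le_rfl, ?_⟩
          · intro y hy x hx
            linarith [hl.2.2 y hy x hx]
          · intro x hx y hy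
            exact (hld.2.2 x hx y hy).trans_le (min_le_right _ _)
        refine ⟨single_mem_Sp hQ _, ?_, fun _ => rfl⟩
        · rw [d_single]
          refine (eq_on_Sp Θ LinearMap.id ?_ (dl_mem l)).symm
          intro l' h
          refine (HΘ l' (hdl l hlm hl l' h)).2.2 ⟨fun _ _ => trivial, by have := h.2; omega, ?_⟩
          intro x hx y hy
          exact (hld.2.2 x (h.1.subset hx) y (h.1.subset hy)).trans_le (min_le_left _ _)
      · rw [if_neg hld]
        exact ⟨(hw l hlm hl hld).1, (hw l hlm hl hld).2, fun h => (hld h).elim⟩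
    · rw [if_neg hlm]
      have hl' : Q Set.univ m η0 l := ⟨hl.1, by have := hl.2.1; omega, fun x hx y hy =>
        (hl.2.2 x hx y hy).trans_le hηη0⟩
      refine ⟨Sp_mono (Q_mono ?_ le_rfl (min_le_right _ _)) (HΘ l hl').1, (HΘ l hl').2.1, ?_⟩
      · intro y hy x hx
        exact (hy x hx).trans_le (min_le_right _ _)
      · intro h
        exact (HΘ l hl').2.2 ⟨h.1, hl'.2.1, fun x hx y hy =>
          (h.2.2 x hx y hy).trans_le (min_le_left _ _)⟩

lemma base (F : Type*) [CommRing F] [Finite F] (E : Type*) [NormedAddCommGroup E] [NormedSpace ℝ E]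
    [ProperSpace E] [ChartedSpace E M] [CompactSpace M] (m : ℕ) : ∃ c : ℕ, ∀ ε > 0,
    ∃ δ > 0, ∃ κ : V F M → Fin c, ∀ z ∈ (Sp (Q Set.univ m δ) : Submodule F (V F M)),
      ∀ z' ∈ (Sp (Q Set.univ m δ) : Submodule F (V F M)), d z = 0 → d z' = 0 → κ z = κ z' →
      ∃ u ∈ (Sp (Q Set.univ (m+1) ε) : Submodule F (V F M)), z - z' = d u := by
  classical
  obtain ⟨η, hη, H⟩ := subd (F := F) (M := M) E (m+1) 1 one_pos
  -- finite net
  obtain ⟨t, -, htf, ht⟩ := Metric.totallyBounded_iff.1 (isCompact_univ (X := M)).totallyBounded (η/3)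
    (by positivity) |>.imp (fun t h => (⟨trivial, h⟩ : True ∧ _))
  have hr : ∀ x : M, ∃ y ∈ t, dist x y < η/3 := by
    intro x
    obtain ⟨y, hy, h⟩ := Set.mem_iUnion₂.1 (ht (Set.mem_univ x))
    exact ⟨y, hy, h⟩
  choose ρ hρt hρ using hr
  have hfin : {l : List M | l.length ≤ m ∧ ∀ x ∈ l, x ∈ t}.Finite := by
    have := htf.to_subtype
    refine ((List.finite_length_le ↥t m).image (List.map Subtype.val)).subset ?_
    rintro l ⟨h1, h2⟩
    lift l to List t using h2
    exact ⟨l, by simpa using h1, rfl⟩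
  set T := {l : List M | l.length ≤ m ∧ ∀ x ∈ l, x ∈ t} with hT
  have : Finite T := hfin
  have : Finite (T → F) := inferInstance
  obtain ⟨c, ⟨enc⟩⟩ := Finite.exists_equiv_fin (T → F)
  refine ⟨c, fun ε hε => ?_⟩
  obtain ⟨δ0, hδ0, Θ, HΘ⟩ := H ε hε
  have hkey : ∀ z ∈ (Sp (Q Set.univ m (min δ0 (η/3))) : Submodule F (V F M)), d z = 0 →
      ∃ u ∈ (Sp (Q Set.univ (m+1) ε) : Submodule F (V F M)), Θ (mapL ρ z) - z = d u := by
    intro z hz hdz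
    have hP : P id ρ z ∈ (Sp (Q Set.univ (m+1) η) : Submodule F (V F M)) := by
      refine P_mem _ _ ?_ hz
      intro l hl l' h1 h2
      refine ⟨fun _ _ => trivial, by have := hl.2.1; omega, ?_⟩
      intro y hy y' hy'
      obtain ⟨x, hx, h⟩ := h1 y hy
      obtain ⟨x', hx', h'⟩ := h1 y' hy'
      have e1 : dist y x < η/3 := by
        rcases h with rfl | rfl
        · simp; positivity
        · rw [dist_comm]; exact hρ x
      have e2 : dist x' y' < η/3 := by
        rcases h' with rfl | rfl
        · simp; positivity
        · exact hρ x'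
      have e3 := (hl.2.2 x hx x' hx').trans_le (min_le_right _ _)
      linarith [dist_triangle4 y x x' y']
    refine ⟨Θ (P id ρ z), ?_, ?_⟩
    · refine map_Sp Θ _ ?_ hP
      intro l hl
      exact Sp_mono (Q_mono (Set.subset_univ _) hl.2.1 le_rfl) (HΘ l hl).1
    · have h1 : d (Θ (P id ρ z)) = Θ (d (P id ρ z)) := by
        refine eq_on_Sp (d ∘ₗ Θ) (Θ ∘ₗ d) ?_ hP
        intro l hl
        rw [LinearMap.comp_apply, LinearMap.comp_apply, d_single]
        exact (HΘ l hl).2.1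
      have h2 : Θ z = z := by
        refine eq_on_Sp Θ LinearMap.id ?_ hz
        intro l hl
        refine (HΘ l ?_).2.2 ?_
        · exact Q_mono le_rfl (by omega) ((min_le_right _ _).trans (by linarith)) l hl
        · exact Q_mono le_rfl (by omega) (min_le_left _ _) l hl
      rw [h1, prism, hdz, mapL_id]
      simp [h2]
  have hmap : ∀ z ∈ (Sp (Q Set.univ m (min δ0 (η/3))) : Submodule F (V F M)),
      mapL ρ z ∈ (Sp (fun l => l ∈ T) : Submodule F (V F M)) := by
    intro z hz
    refine mapL_mem _ ?_ hz
    intro l hl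
    refine ⟨by simpa using hl.2.1, ?_⟩
    intro x hx
    obtain ⟨y, _, rfl⟩ := List.mem_map.1 hx
    exact hρt y
  refine ⟨min δ0 (η/3), by positivity, fun z => enc (fun l => mapL ρ z l.1), ?_⟩
  intro z hz z' hz' hdz hdz' hk
  have heq : mapL ρ z = mapL ρ z' := by
    ext l
    by_cases hl : l ∈ T
    · exact congrFun (enc.injective hk) ⟨l, hl⟩
    · rw [Finsupp.notMem_support_iff.1 (fun h => hl (hmap z hz h)),
        Finsupp.notMem_support_iff.1 (fun h => hl (hmap z' hz' h))]
  obtain ⟨u, hu, h⟩ := hkey z hz hdz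
  obtain ⟨u', hu', h'⟩ := hkey z' hz' hdz'
  refine ⟨u' - u, Submodule.sub_mem _ hu' hu, ?_⟩
  rw [map_sub, ← h, ← h', heq]
  abel

end sub
end FA

namespace FA
open Finsupp
open scoped Topology
section cx
universe u v
variable (W : Type v) [AddCommGroup W] (F : Type) [CommRing F] (M : Type u) [MetricSpace M]
  [AddAction W M]

def Rel (δ ε : ℝ) : Prop := ∀ (x y : M) (w : W), dist x y < δ → dist (w +ᵥ x) (w +ᵥ y) < ε

structure Cx where
  C : Type u
  [grp : AddCommGroup C]
  D : C →+ C
  act : W → C →+ C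
  Fil : ℕ → ℝ → AddSubgroup C
  top : C →+ V F M
  DD : ∀ x, D (D x) = 0
  act_add : ∀ g h x, act (g + h) x = act g (act h x)
  act_zero : ∀ x, act 0 x = x
  D_act : ∀ g x, D (act g x) = act g (D x)
  mono : ∀ m δ ε, δ ≤ ε → Fil m δ ≤ Fil m ε
  act_Fil : ∀ m δ ε, Rel W M δ ε → ∀ g, ∀ x ∈ Fil m δ, act g x ∈ Fil m ε
  top_act : ∀ g x, top (act g x) = mapL (fun y => g +ᵥ y) (top x)

attribute [instance] Cx.grp

variable {W F M}

noncomputable def cx0 : Cx W F M where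
  C := V F M
  D := (d : V F M →ₗ[F] V F M).toAddMonoidHom
  act g := (mapL (fun y => g +ᵥ y) : V F M →ₗ[F] V F M).toAddMonoidHom
  Fil m ε := (Sp (Q Set.univ m ε) : Submodule F (V F M)).toAddSubgroup
  top := AddMonoidHom.id _
  DD := d_d
  act_add g h x := by
    change mapL _ x = mapL _ (mapL _ x)
    rw [mapL_mapL]
    congr 1
    congr 1
    ext y
    exact add_vadd g h y
  act_zero x := by
    change mapL _ x = x
    convert mapL_id x using 2
    congr 1
    ext y
    exact zero_vadd W y
  D_act g x := d_mapL _ x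
  mono m δ ε h := Sp_mono (Q_mono le_rfl le_rfl h)
  act_Fil m δ ε h g x hx := by
    refine mapL_mem _ ?_ hx
    intro l hl
    refine ⟨fun _ _ => trivial, by simpa using hl.2.1, ?_⟩
    intro a ha b hb
    obtain ⟨a, ha', rfl⟩ := List.mem_map.1 ha
    obtain ⟨b, hb', rfl⟩ := List.mem_map.1 hb
    exact h a b g (hl.2.2 a ha' b hb')
  top_act g x := rfl

noncomputable def cone (X : Cx W F M) (t : W) : Cx W F M where
  C := X.C × X.C
  D := AddMonoidHom.mk' (fun a => (X.D a.1, X.act t a.1 - a.1 - X.D a.2)) (by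
    intro a b
    ext
    · simp
    · simp only [Prod.fst_add, Prod.snd_add, map_add]; abel)
  act g := AddMonoidHom.mk' (fun a => (X.act g a.1, X.act g a.2)) (by
    intro a b
    ext <;> simp)
  Fil m ε := (X.Fil m ε).prod (X.Fil (m+1) ε)
  top := X.top.comp (AddMonoidHom.snd _ _)
  DD x := by
    ext
    · simp [X.DD]
    · simp [X.DD, X.D_act]
  act_add g h x := by
    ext
    · simp [X.act_add]
    · simp [X.act_add]
  act_zero x := by
    ext
    · simp [X.act_zero]
    · simp [X.act_zero]
  D_act g x := by
    ext
    · simp [X.D_act]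
    · simp [X.D_act, ← X.act_add, add_comm]
  mono m δ ε h := AddSubgroup.prod_mono (X.mono _ _ _ h) (X.mono _ _ _ h)
  act_Fil m δ ε h g x hx := ⟨X.act_Fil _ _ _ h g _ hx.1, X.act_Fil _ _ _ h g _ hx.2⟩
  top_act g x := X.top_act g x.2

lemma cone_D (X : Cx W F M) (t : W) (a b : X.C) : (cone X t).D (a, b) =
  (X.D a, X.act t a - a - X.D b) := rfl

lemma cone_act (X : Cx W F M) (t g : W) (a b : X.C) : (cone X t).act g (a, b) =
  (X.act g a, X.act g b) := rfl

lemma cone_Fil (X : Cx W F M) (t : W) (m : ℕ) (ε : ℝ) (a b : X.C) :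
  ((a, b) : X.C × X.C) ∈ (cone X t).Fil m ε ↔ a ∈ X.Fil m ε ∧ b ∈ X.Fil (m+1) ε := Iff.rfl

/-- colorability -/
def Col (X : Cx W F M) (m : ℕ) (c : ℕ) (δ ε : ℝ) : Prop :=
  ∃ κ : X.C → Fin c, ∀ z ∈ X.Fil m δ, ∀ z' ∈ X.Fil m δ, X.D z = 0 → X.D z' = 0 → κ z = κ z' →
    ∃ u ∈ X.Fil (m+1) ε, z - z' = X.D u

lemma Col_cone (X : Cx W F M) (t : W) (m c c' : ℕ) (δ' δ ε1 ε2 ε : ℝ) (hR : Rel W M ε1 ε2)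
    (h12 : ε1 ≤ ε2) (hδ : δ' ≤ δ) (hδ2 : δ' ≤ ε2) (hε : ε1 ≤ ε)
    (h1 : Col X m c δ ε1) (h2 : Col X (m+1) c' ε2 ε) : Col (cone X t) m (c * c') δ' ε := by
  classical
  obtain ⟨κ, hκ⟩ := h1
  obtain ⟨κ', hκ'⟩ := h2
  let good : X.C × X.C → Prop := fun z => z ∈ (cone X t).Fil m δ' ∧ (cone X t).D z = 0
  have hrep : ∀ i : Fin c, ∃ z0 : X.C × X.C, ∀ z, good z → κ z.1 = i → good z0 ∧ κ z0.1 = i := by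
    intro i
    by_cases h : ∃ z, good z ∧ κ z.1 = i
    · obtain ⟨z, hz⟩ := h
      exact ⟨z, fun _ _ _ => hz⟩
    · exact ⟨0, fun z hz hi => (h ⟨z, hz, hi⟩).elim⟩
  choose z0 hz0 using hrep
  have good1 : ∀ z, good z → X.D z.1 = 0 ∧ X.D z.2 = X.act t z.1 - z.1 := by
    rintro ⟨a, b⟩ ⟨-, h⟩
    rw [cone_D] at h
    have h1 := congrArg Prod.fst h
    have h2 := congrArg Prod.snd h
    exact ⟨h1, (sub_eq_zero.1 h2).symm⟩
  have hu : ∀ z : X.C × X.C, ∃ u : X.C, good z → u ∈ X.Fil (m+1) ε1 ∧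
      z.1 - (z0 (κ z.1)).1 = X.D u := by
    intro z
    by_cases h : good z
    · obtain ⟨hg, hk⟩ := hz0 (κ z.1) z h rfl
      obtain ⟨u, hu, e⟩ := hκ z.1 (X.mono _ _ _ hδ h.1.1) _ (X.mono _ _ _ hδ hg.1.1)
        (good1 _ h).1 (good1 _ hg).1 hk.symm
      exact ⟨u, fun _ => ⟨hu, e⟩⟩
    · exact ⟨0, fun h' => (h h').elim⟩
  choose u hu using hu
  let q : X.C × X.C → X.C := fun z => z.2 - (z0 (κ z.1)).2 - (X.act t (u z) - u z)
  have hq : ∀ z, good z → q z ∈ X.Fil (m+1) ε2 ∧ X.D (q z) = 0 := by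
    intro z h
    obtain ⟨hg, hk⟩ := hz0 (κ z.1) z h rfl
    refine ⟨?_, ?_⟩
    · refine sub_mem (sub_mem (X.mono _ _ _ hδ2 h.1.2) (X.mono _ _ _ hδ2 hg.1.2))
        (sub_mem (X.act_Fil _ _ _ hR _ _ (hu z h).1) (X.mono _ _ _ h12 (hu z h).1))
    · simp only [q, map_sub, X.D_act, (good1 _ h).2, (good1 _ hg).2, ← (hu z h).2]
      abel
  refine ⟨fun z => finProdFinEquiv (κ z.1, κ' (q z)), ?_⟩
  intro z hz z' hz' hD hD' hk
  have gz : good z := ⟨hz, hD⟩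
  have gz' : good z' := ⟨hz', hD'⟩
  have hk := finProdFinEquiv.injective hk
  obtain ⟨hk1, hk2⟩ := Prod.mk.inj hk
  obtain ⟨v, hv, e⟩ := hκ' _ (hq z gz).1 _ (hq z' gz').1 (hq z gz).2 (hq z' gz').2 hk2
  refine ⟨(u z - u z', -v), ?_, ?_⟩
  · exact (cone_Fil ..).2 ⟨sub_mem (X.mono _ _ _ hε (hu z gz).1) (X.mono _ _ _ hε (hu z' gz').1), neg_mem hv⟩
  · rw [cone_D]
    refine Prod.ext ?_ ?_
    · change z.1 - z'.1 = _
      rw [map_sub, ← (hu z gz).2, ← (hu z' gz').2, hk1]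
      abel
    · change z.2 - z'.2 = X.act t (u z - u z') - (u z - u z') - X.D (-v)
      rw [map_neg, ← e]
      simp only [q, hk1, map_sub]
      abel

noncomputable def tower : List (W × (W → F)) → Cx W F M
  | [] => cx0
  | s :: ts => cone (tower ts) s.1

def cc (c0 : ℕ → ℕ) : ℕ → ℕ → ℕ
  | 0, m => c0 m
  | j+1, m => cc c0 j m * cc c0 j (m+1)

lemma Col_tower (c0 : ℕ → ℕ) (h0 : ∀ m, ∀ ε > 0, ∃ δ > 0, Col (cx0 : Cx W F M) m (c0 m) δ ε)
    (hR : ∀ ε > 0, ∃ δ > 0, δ ≤ ε ∧ Rel W M δ ε) (j : ℕ) : ∀ m, ∀ ε > 0, ∃ δ > 0,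
    ∀ ts : List (W × (W → F)), ts.length = j → Col (tower ts : Cx W F M) m (cc c0 j m) δ ε := by
  induction j with
  | zero =>
    intro m ε hε
    obtain ⟨δ, hδ, h⟩ := h0 m ε hε
    refine ⟨δ, hδ, fun ts hts => ?_⟩
    rw [List.length_eq_zero_iff] at hts
    subst hts
    exact h
  | succ j ih =>
    intro m ε hε
    obtain ⟨ε2, hε2, H2⟩ := ih (m+1) ε hε
    obtain ⟨ε1, hε1, h12, hr⟩ := hR (min ε2 ε) (lt_min hε2 hε)
    obtain ⟨δ, hδ, H⟩ := ih m ε1 hε1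
    refine ⟨min δ ε2, lt_min hδ hε2, fun ts hts => ?_⟩
    match ts, hts with
    | s :: ts, hts =>
      have hts : ts.length = j := by simpa using hts
      exact Col_cone (tower ts) s.1 m _ _ _ δ ε1 ε2 ε
        (fun x y w h => (hr x y w h).trans_le (min_le_left _ _)) (h12.trans (min_le_left _ _))
        (min_le_left _ _) (min_le_right _ _) (h12.trans (min_le_right _ _)) (H ts hts) (H2 ts hts)

def Good : (ts : List (W × (W → F))) → (tower ts : Cx W F M).C → Prop
  | [], a => ∃ x : M, a = (single [x] 1 : V F M)
  | s :: ts, a => Good ts a.1 ∧ (tower ts).D a.2 = (tower ts).act s.1 a.1 - a.1 ∧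
      (∀ g h, s.2 (g + h) = s.2 g + s.2 h) ∧ (∀ s' ∈ ts, s.2 s'.1 = 0) ∧ s.2 s.1 ≠ 0

lemma Good_act : ∀ (ts : List (W × (W → F))) (a : (tower ts : Cx W F M).C), Good ts a →
    ∀ g, (tower ts).act g ((tower ts).D a) = (tower ts).D a
  | [], a, ⟨x, hx⟩, g => by
    subst hx
    change mapL _ (d (single [x] (1:F))) = d (single [x] (1:F))
    simp [d_single, dl, mapL_single]
  | s :: ts, a, ⟨h1, h2, _⟩, g => by
    obtain ⟨a, b⟩ := a
    change (cone (tower ts) s.1).act g ((cone (tower ts) s.1).D (a, b)) =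
      (cone (tower ts) s.1).D (a, b)
    rw [cone_D, h2, cone_act, sub_self, map_zero, Good_act ts a h1]

end cx
end FA

namespace FA
open Finsupp
open scoped Topology
section ex
universe u v
variable {W : Type v} [AddCommGroup W] {p : ℕ} [Fact p.Prime] [Module (ZMod p) W] [Finite W]
  {M : Type u} [MetricSpace M] [AddAction W M]

lemma quot_card (k j : ℕ) (hk : Nat.card W = p ^ k) (s : List W) (hs : s.length = j) (c : ℕ)
    (hc : p ^ j * c < p ^ k) : c < Nat.card (W ⧸ Submodule.span (ZMod p) {x | x ∈ s}) := by
  classical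
  set S := Submodule.span (ZMod p) {x | x ∈ s} with hS
  have h1 : Nat.card S ≤ p ^ j := by
    rw [Module.natCard_eq_pow_finrank (K := ZMod p) (V := S), Nat.card_zmod]
    apply Nat.pow_le_pow_right (Fact.out : p.Prime).pos
    have e : {x | x ∈ s} = (s.toFinset : Set W) := by ext; simp
    rw [hS, e]
    exact (finrank_span_finset_le_card _).trans ((List.toFinset_card_le s).trans hs.le)
  have h2 : Nat.card W = Nat.card S * Nat.card (W ⧸ S) := Submodule.card_eq_card_quotient_mul_card S
  by_contra h
  push Not at h
  have := Nat.mul_le_mul h1 h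
  omega

lemma exists_good [Nonempty M] (c0 : ℕ → ℕ)
    (h0 : ∀ m, ∀ ε > 0, ∃ δ > 0, Col (cx0 : Cx W (ZMod p) M) m (c0 m) δ ε)
    (hR : ∀ ε > 0, ∃ δ > 0, δ ≤ ε ∧ Rel W M δ ε) (k : ℕ) (hk : Nat.card W = p ^ k) (r : ℕ)
    (hr : ∀ j < r, p ^ j * cc c0 j 1 < p ^ k) (j : ℕ) : j ≤ r → ∀ ε > 0,
    ∃ ts : List (W × (W → ZMod p)), ts.length = j ∧ ∃ a : (tower ts : Cx W (ZMod p) M).C,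
      Good ts a ∧ a ∈ (tower ts : Cx W (ZMod p) M).Fil 1 ε := by
  induction j with
  | zero =>
    intro _ ε hε
    obtain ⟨x⟩ := ‹Nonempty M›
    refine ⟨[], rfl, (single [x] 1 : V (ZMod p) M), ⟨x, rfl⟩, ?_⟩
    exact single_mem_Sp ⟨by simp, by simp, by simpa using hε⟩ _
  | succ j ih =>
    intro hj ε hε
    obtain ⟨ε', hε', hle, hrel⟩ := hR ε hε
    obtain ⟨δ, hδ, hcol⟩ := Col_tower c0 h0 hR j 1 ε' hε'
    obtain ⟨δ', hδ', hle', hrel'⟩ := hR (min δ ε) (lt_min hδ hε)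
    obtain ⟨ts, hts, ha⟩ := ih (by omega) δ' hδ'
    have hcol := hcol ts hts
    set X : Cx W (ZMod p) M := tower ts with hX
    obtain ⟨a, ha, haF⟩ := ha
    obtain ⟨κ, hκ⟩ := hcol
    have hz : ∀ g, X.act g a - a ∈ X.Fil 1 δ := fun g => X.mono _ _ _ (min_le_left δ ε)
      (sub_mem (X.act_Fil _ _ _ hrel' g a haF) (X.mono _ _ _ hle' haF))
    have hDz : ∀ g, X.D (X.act g a - a) = 0 := fun g => by
      rw [map_sub, X.D_act, Good_act ts a ha, sub_self]
    set S := Submodule.span (ZMod p) {x | x ∈ ts.map Prod.fst} with hS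
    have hlt := quot_card (p := p) k j hk (ts.map Prod.fst) (by simpa using hts) _ (hr j (by omega))
    rw [← hS] at hlt
    have : Finite (W ⧸ S) := Finite.of_surjective _ (Submodule.mkQ_surjective S)
    have := Fintype.ofFinite (W ⧸ S)
    obtain ⟨q, q', hne, heq⟩ := Fintype.exists_ne_map_eq_of_card_lt
      (fun q : W ⧸ S => κ (X.act q.out a - a)) (by simpa [Nat.card_eq_fintype_card] using hlt)
    obtain ⟨u, hu, e⟩ := hκ _ (hz q.out) _ (hz q'.out) (hDz _) (hDz _) heq
    set g := q.out
    set g' := q'.out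
    have hgS : g - g' ∉ S := by
      intro h
      apply hne
      rw [← Submodule.Quotient.eq] at h
      have h1 : (Submodule.Quotient.mk g : W ⧸ S) = q := Quotient.out_eq' q
      have h2 : (Submodule.Quotient.mk g' : W ⧸ S) = q' := Quotient.out_eq' q'
      rw [← h1, ← h2, h]
    obtain ⟨χ, hχ, hχS⟩ := Submodule.exists_le_ker_of_notMem hgS
    refine ⟨(g - g', χ) :: ts, by simp [hts], (a, X.act (-g') u), ⟨ha, ?_, ?_, ?_, hχ⟩, ?_⟩
    · change X.D (X.act (-g') u) = X.act (g - g') a - a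
      rw [X.D_act, ← e, sub_sub_sub_cancel_right, map_sub, ← X.act_add, ← X.act_add,
        neg_add_cancel, X.act_zero, neg_add_eq_sub]
    · exact fun g h => map_add χ g h
    · intro s' hs'
      exact hχS (Submodule.subset_span (List.mem_map_of_mem hs'))
    · exact (cone_Fil ..).2 ⟨X.mono _ _ _ (hle'.trans (min_le_right _ _)) haF,
        X.act_Fil _ _ _ hrel _ _ hu⟩
end ex

section func
universe u v
variable {W : Type v} [AddCommGroup W] {F : Type} [CommRing F] {M : Type u}

noncomputable def bet (θ : M → F) (lam : V F M →ₗ[F] F) : V F M →ₗ[F] F :=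
  Finsupp.linearCombination F (fun l => match l with
    | [] => 0
    | x :: l' => θ x * lam (single (x :: l') 1))

lemma bet_nil (θ : M → F) (lam : V F M →ₗ[F] F) : bet θ lam (single [] 1) = 0 := by simp [bet]
lemma bet_cons (θ : M → F) (lam : V F M →ₗ[F] F) (x : M) (l : List M) :
    bet θ lam (single (x :: l) 1) = θ x * lam (single (x :: l) 1) := by simp [bet]
lemma bet_consL (θ : M → F) (lam : V F M →ₗ[F] F) (x : M) (v : V F M) :
    bet θ lam (consL x v) = θ x * lam (consL x v) := by
  have : bet θ lam ∘ₗ consL x = θ x • (lam ∘ₗ consL x) := by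
    apply hom_ext
    intro l
    simp [consL_single, bet_cons]
  exact LinearMap.congr_fun this v

noncomputable def lam : List (M → F) → V F M →ₗ[F] F
  | [] => Finsupp.linearCombination F (fun l => if l.length = 1 then 1 else 0)
  | θ :: θs => bet θ (lam θs) ∘ₗ d

lemma lam_nil (l : List M) : lam ([] : List (M → F)) (single l 1) = if l.length = 1 then 1 else 0 := by
  simp [lam]

lemma lam_d (θs : List (M → F)) (v : V F M) : lam θs (d v) = 0 := by
  cases θs with
  | nil =>
    have : lam [] ∘ₗ d = (0 : V F M →ₗ[F] F) := by
      apply hom_ext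
      intro l
      match l with
      | [] => simp [d_nil]
      | [x] => simp [d_single, dl, lam_nil]
      | [x, y] => simp [d_single, dl, lam_nil, consL_single]
      | x :: y :: z :: l =>
        rw [LinearMap.comp_apply, d_single, LinearMap.zero_apply]
        refine eq_on_Sp (lam [] : V F M →ₗ[F] F) 0 ?_ (dl_mem _)
        · intro l' h
          rw [lam_nil, if_neg]
          · rfl
          · have := h.2
            simp at this
            omega
    exact LinearMap.congr_fun this v
  | cons θ θs => simp [lam, d_d]

lemma lam_empty (θs : List (M → F)) : lam θs (single [] 1) = 0 := by
  cases θs with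
  | nil => simp [lam_nil]
  | cons θ θs => simp [lam, d_nil]

lemma lam_const (θs : List (M → F)) (l : List M) (h : ∃ θ ∈ θs, ∀ x ∈ l, ∀ y ∈ l, θ x = θ y) :
    lam θs (single l 1) = 0 := by
  induction θs generalizing l with
  | nil => simp at h
  | cons θ θs ih =>
    match l with
    | [] => exact lam_empty _
    | [x] => simp [lam, d_single, dl, bet_nil]
    | x :: y :: l =>
      have e : lam θs (single (y :: l) 1) = lam θs (consL x (dl (y :: l))) := by
        have := lam_d θs (single (x :: y :: l) 1)
        rwa [d_single, dl, map_sub, sub_eq_zero] at this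
      have : lam (θ :: θs) (single (x :: y :: l) 1) = (θ y - θ x) * lam θs (single (y :: l) 1) := by
        simp only [lam, LinearMap.comp_apply]
        rw [d_single, dl, map_sub, bet_cons, bet_consL, ← e]
        ring
      rw [this]
      obtain ⟨θ', hθ', h⟩ := h
      rcases List.mem_cons.1 hθ' with rfl | h'
      · rw [h y (by simp) x (by simp)]; simp
      · rw [ih (y :: l) ⟨θ', h', fun a ha b hb => h a (by simp [List.mem_cons.1 ha])
          b (by simp [List.mem_cons.1 hb])⟩, mul_zero]

variable [AddAction W M]

lemma bet_act (θ : M → F) (μ : V F M →ₗ[F] F) (χ : W → F)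
    (hθ : ∀ g x, θ (g +ᵥ x) = χ g + θ x) (g : W)
    (hμ : ∀ v, μ (mapL (fun y => g +ᵥ y) v) = μ v) (hμ0 : μ (single [] 1) = 0) (v : V F M) :
    bet θ μ (mapL (fun y => g +ᵥ y) v) = bet θ μ v + χ g * μ v := by
  have : bet θ μ ∘ₗ mapL (fun y => g +ᵥ y) = bet θ μ + χ g • μ := by
    apply hom_ext
    intro l
    match l with
    | [] => simp [mapL_single, bet_nil, hμ0]
    | x :: l =>
      have := hμ (single (x :: l) 1)
      simp only [mapL_single, List.map_cons] at this
      simp [mapL_single, bet_cons, hθ, this]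
      ring
  exact LinearMap.congr_fun this v

lemma lam_act (θs : List (M → F)) (h : ∀ θ ∈ θs, ∃ χ : W → F, ∀ g x, θ (g +ᵥ x) = χ g + θ x) (g : W)
    (v : V F M) : lam θs (mapL (fun y => g +ᵥ y) v) = lam θs v := by
  induction θs generalizing v with
  | nil =>
    have : lam [] ∘ₗ mapL (fun y => g +ᵥ y) = (lam [] : V F M →ₗ[F] F) := by
      apply hom_ext
      intro l
      simp [mapL_single, lam_nil]
    exact LinearMap.congr_fun this v
  | cons θ θs ih =>
    obtain ⟨χ, hχ⟩ := h θ (by simp)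
    simp only [lam, LinearMap.comp_apply]
    rw [d_mapL, bet_act θ _ χ hχ g (fun v => ih (fun θ hθ => h θ (by simp [hθ])) v) (lam_empty _),
      lam_d]
    simp

variable [MetricSpace M]

lemma top_D (ts : List (W × (W → F))) (μ : V F M →ₗ[F] F)
    (hμ : ∀ s ∈ ts, ∀ v, μ (mapL (fun y => s.1 +ᵥ y) v) = μ v) (y : (tower ts : Cx W F M).C) :
    ∃ e : ℤˣ, μ ((tower ts).top ((tower ts).D y)) = (e : ℤ) * μ (d ((tower ts).top y)) := by
  induction ts with
  | nil => exact ⟨1, by simp only [Units.val_one, Int.cast_one, one_mul]; rfl⟩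
  | cons s ts ih =>
    obtain ⟨a, b⟩ := y
    obtain ⟨e, he⟩ := ih (fun s' hs' => hμ s' (by simp [hs'])) b
    refine ⟨-e, ?_⟩
    have : (tower (s :: ts) : Cx W F M).top ((tower (s :: ts)).D (a, b)) =
      (tower ts).top ((tower ts).act s.1 a - a - (tower ts).D b) := rfl
    have h2 : μ ((tower ts).top ((tower ts).act s.1 a - a - (tower ts).D b)) =
        - μ ((tower ts).top ((tower ts).D b)) := by
      simp only [map_sub, (tower ts).top_act, hμ s (by simp)]
      simp
    rw [this, h2, he]
    rw [Units.val_neg, Int.cast_neg, neg_mul]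
    rfl

def thetas (φ : ℕ → M → W) : List (W × (W → F)) → List (M → F)
  | [] => []
  | s :: ts => (s.2 ∘ φ ts.length) :: thetas φ ts

lemma mem_thetas (φ : ℕ → M → W) (ts : List (W × (W → F))) (i : ℕ) (hi : i < ts.length) :
    ∃ s ∈ ts, s.2 ∘ φ i ∈ thetas φ ts := by
  induction ts with
  | nil => simp at hi
  | cons s ts ih =>
    by_cases h : i = ts.length
    · exact ⟨s, by simp, by simp [thetas, h]⟩
    · simp at hi
      obtain ⟨s', hs', h'⟩ := ih (by omega)
      exact ⟨s', by simp [hs'], by simp [thetas, h']⟩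

lemma thetas_eqv (φ : ℕ → M → W) (hφ : ∀ i g x, φ i (g +ᵥ x) = g + φ i x)
    (ts : List (W × (W → F))) (a : (tower ts : Cx W F M).C) (ha : Good ts a) :
    ∀ θ ∈ thetas φ ts, ∃ χ : W → F, ∀ g x, θ (g +ᵥ x) = χ g + θ x := by
  induction ts with
  | nil => simp [thetas]
  | cons s ts ih =>
    intro θ hθ
    rcases List.mem_cons.1 hθ with rfl | h
    · refine ⟨s.2, fun g x => ?_⟩
      simp only [Function.comp, hφ]
      exact ha.2.2.1 _ _
    · exact ih a.1 ha.1 θ h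

lemma lam_top [IsDomain F] (φ : ℕ → M → W) (hφ : ∀ i g x, φ i (g +ᵥ x) = g + φ i x)
    (ts : List (W × (W → F))) (a : (tower ts : Cx W F M).C) (ha : Good ts a) :
    lam (thetas φ ts) ((tower ts).top a) ≠ 0 := by
  induction ts with
  | nil =>
    obtain ⟨x, hx⟩ := ha
    subst hx
    change lam [] (single [x] 1) ≠ 0
    simp [lam_nil]
  | cons s ts ih =>
    have hθ := thetas_eqv φ hφ (s :: ts) a ha
    obtain ⟨a, b⟩ := a
    obtain ⟨h1, h2, h3, h4, h5⟩ := ha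
    have hθ' := thetas_eqv φ hφ ts a h1
    have hb : ∀ g v, bet (s.2 ∘ φ ts.length) (lam (thetas φ ts)) (mapL (fun y => g +ᵥ y) v) =
        bet (s.2 ∘ φ ts.length) (lam (thetas φ ts)) v + s.2 g * lam (thetas φ ts) v := by
      intro g v
      refine bet_act _ _ s.2 ?_ g (lam_act _ hθ' g) (lam_empty _) v
      intro g x
      simp only [Function.comp, hφ]
      exact h3 _ _
    obtain ⟨e, he⟩ := top_D ts (bet (s.2 ∘ φ ts.length) (lam (thetas φ ts))) (by
      intro s' hs' v
      rw [hb, h4 s' hs', zero_mul, add_zero]) b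
    have h2' : (tower ts : Cx W F M).D b = (tower ts).act s.1 a - a := h2
    rw [h2', map_sub, (tower ts).top_act, map_sub, hb, add_sub_cancel_left] at he
    intro h0
    have h0' : bet (s.2 ∘ φ ts.length) (lam (thetas φ ts)) (d ((tower ts).top b)) = 0 := h0
    rw [h0', mul_zero] at he
    exact (mul_ne_zero h5 (ih a h1)) he

lemma top_Fil (ts : List (W × (W → F))) (m : ℕ) (ε : ℝ) (a : (tower ts : Cx W F M).C)
    (ha : a ∈ (tower ts : Cx W F M).Fil m ε) :
    (tower ts).top a ∈ (Sp (Q Set.univ (m + ts.length) ε) : Submodule F (V F M)) := by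
  induction ts generalizing m with
  | nil => exact ha
  | cons s ts ih =>
    obtain ⟨a, b⟩ := a
    have := ih (m+1) b ha.2
    rw [List.length_cons, show m + (ts.length + 1) = m + 1 + ts.length by ring]
    exact this

end func

section main
universe u v

theorem mainD {W : Type v} [AddCommGroup W] {p : ℕ} [Fact p.Prime] [Module (ZMod p) W] [Finite W]
    {M : Type u} [MetricSpace M] [AddAction W M] [Nonempty M] (c0 : ℕ → ℕ)
    (h0 : ∀ m, ∀ ε > 0, ∃ δ > 0, Col (cx0 : Cx W (ZMod p) M) m (c0 m) δ ε)
    (hR : ∀ ε > 0, ∃ δ > 0, δ ≤ ε ∧ Rel W M δ ε) (k : ℕ) (hk : Nat.card W = p ^ k) (r : ℕ)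
    (hr : ∀ j < r, p ^ j * cc c0 j 1 < p ^ k)
    (φ : ℕ → M → W) (hφ : ∀ i g x, φ i (g +ᵥ x) = g + φ i x)
    (ε : ℝ) (hε : 0 < ε) (hc : ∀ x : M, ∃ i < r, ∀ y, dist x y < ε → φ i y = φ i x) : False := by
  obtain ⟨ts, hts, a, ha, haF⟩ := exists_good c0 h0 hR k hk r hr r le_rfl ε hε
  apply lam_top φ hφ ts a ha
  have := eq_on_Sp (lam (thetas φ ts)) 0 ?_ (top_Fil ts 1 ε a haF)
  · simpa using this
  · intro l hl
    rw [LinearMap.zero_apply]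
    cases l with
    | nil => exact lam_empty _
    | cons x l =>
      obtain ⟨i, hi, h⟩ := hc x
      obtain ⟨s, -, hs⟩ := mem_thetas φ ts i (by omega)
      refine lam_const _ _ ⟨_, hs, ?_⟩
      intro y hy z hz
      simp only [Function.comp]
      rw [h y (hl.2.2 x (by simp) y hy), h z (hl.2.2 x (by simp) z hz)]

end main
end FA

namespace FA
open Finsupp
open scoped Topology
set_option linter.unusedSectionVars false
section top
universe u v
variable {W : Type v} [AddCommGroup W] [Finite W] {M : Type u} [MetricSpace M] [AddAction W M]

variable (W) in
def sat (A : Set M) : Set M := {x | ∃ w : W, w +ᵥ x ∈ A}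

variable (W) in
def Inv (A : Set M) : Prop := ∀ (w : W) (x : M), w +ᵥ x ∈ A ↔ x ∈ A

lemma sat_inv (A : Set M) : Inv W (sat W A) := by
  intro w x
  constructor
  · rintro ⟨g, hg⟩
    exact ⟨g + w, by rwa [add_vadd]⟩
  · rintro ⟨g, hg⟩
    exact ⟨g - w, by rwa [← add_vadd, sub_add_cancel]⟩

lemma sat_sub (A : Set M) : A ⊆ sat W A := fun x hx => ⟨0, by rwa [zero_vadd]⟩

lemma sat_le {A B : Set M} (h : A ⊆ B) (hB : Inv W B) : sat W A ⊆ B := by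
  rintro x ⟨w, hw⟩
  exact (hB w x).1 (h hw)

lemma sat_open (hc : ∀ w : W, Continuous (fun x : M => w +ᵥ x)) {A : Set M} (hA : IsOpen A) :
    IsOpen (sat W A) := by
  have : sat W A = ⋃ w : W, (fun x : M => w +ᵥ x) ⁻¹' A := by ext; simp [sat]
  rw [this]
  exact isOpen_iUnion fun w => hA.preimage (hc w)

lemma sat_closed (hc : ∀ w : W, Continuous (fun x : M => w +ᵥ x)) {A : Set M} (hA : IsClosed A) :
    IsClosed (sat W A) := by
  have : sat W A = ⋃ w : W, (fun x : M => w +ᵥ x) ⁻¹' A := by ext; simp [sat]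
  rw [this]
  exact isClosed_iUnion_of_finite fun w => hA.preimage (hc w)

variable (W) in
def Disj (A : Set M) : Prop := ∀ (w : W) (x : M), x ∈ A → w +ᵥ x ∈ A → w = 0

lemma exists_disj (hc : ∀ w : W, Continuous (fun x : M => w +ᵥ x))
    (hf : ∀ w : W, w ≠ 0 → ∀ x : M, w +ᵥ x ≠ x) (x : M) : ∃ A : Set M, IsOpen A ∧ x ∈ A ∧ Disj W A := by
  have : ∀ w : W, ∃ A : Set M, IsOpen A ∧ x ∈ A ∧ (w ≠ 0 → ∀ y ∈ A, w +ᵥ y ∉ A) := by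
    intro w
    by_cases h : w = 0
    · exact ⟨Set.univ, isOpen_univ, trivial, fun h' => (h' h).elim⟩
    · obtain ⟨A, B, hA, hB, h1, h2, h3⟩ := t2_separation (hf w h x)
      refine ⟨B ∩ (fun x : M => w +ᵥ x) ⁻¹' A, hB.inter (hA.preimage (hc w)), ⟨h2, h1⟩, ?_⟩
      intro _ y hy hy'
      exact Set.disjoint_left.1 h3 hy.2 hy'.1
  choose A h1 h2 h3 using this
  refine ⟨⋂ w, A w, isOpen_iInter_of_finite h1, Set.mem_iInter.2 h2, ?_⟩
  intro w y hy hy'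
  by_contra h
  exact h3 w h y (Set.mem_iInter.1 hy w) (Set.mem_iInter.1 hy' w)

variable (W) in
def Ord (r : ℕ) (K : Set M) : Prop := ∀ (ι : Type u) [Finite ι] (U : ι → Set M),
  (∀ i, IsOpen (U i)) → (∀ i, Inv W (U i)) → (⋃ i, U i = Set.univ) →
  ∃ V : ι → Set M, (∀ i, V i ⊆ U i) ∧ (∀ i, IsOpen (V i)) ∧ (∀ i, Inv W (V i)) ∧
    (⋃ i, V i = Set.univ) ∧ ∀ x ∈ K, {i | x ∈ V i}.ncard ≤ r

lemma cubes {n : ℕ} {δ : ℝ} (hδ : 0 < δ) : ∃ cube : (Fin n → ℤ) → Set (EuclideanSpace ℝ (Fin n)),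
    (∀ q, IsOpen (cube q)) ∧ (∀ y, ∃ q, y ∈ cube q) ∧
    (∀ q, ∀ y ∈ cube q, cube q ⊆ Metric.ball y δ) ∧
    ∀ y, ∃ g : (Fin n → Bool) → (Fin n → ℤ), ∀ q, y ∈ cube q → q ∈ Set.range g := by
  have huc : UniformContinuous (WithLp.toLp 2 : (Fin n → ℝ) → EuclideanSpace ℝ (Fin n)) :=
    PiLp.uniformContinuous_toLp 2 _
  obtain ⟨η0, hη0, h⟩ := Metric.uniformContinuous_iff.1 huc δ hδ
  set η := η0 / 2 with hη
  have hηp : 0 < η := by positivity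
  refine ⟨fun q => {c | ∀ i, |c i - η * q i| < η}, ?_, ?_, ?_, ?_⟩
  · intro q
    simp only [Set.ofPred_forall]
    refine isOpen_iInter_of_finite fun i => isOpen_lt ?_ continuous_const
    fun_prop
  · intro y
    refine ⟨fun i => ⌊y i / η⌋, fun i => ?_⟩
    have h1 := Int.floor_le (y i / η)
    have h2 := Int.lt_floor_add_one (y i / η)
    rw [le_div_iff₀ hηp] at h1
    rw [div_lt_iff₀ hηp] at h2
    rw [abs_lt]
    constructor <;> nlinarith
  · intro q y hy z hz
    rw [Metric.mem_ball]
    have : dist (WithLp.ofLp z) (WithLp.ofLp y) < η0 := by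
      rw [dist_pi_lt_iff hη0]
      intro i
      rw [Real.dist_eq]
      have h1 := abs_lt.1 (hy i)
      have h2 := abs_lt.1 (hz i)
      rw [abs_lt]
      constructor <;> linarith
    exact h this
  · intro y
    refine ⟨fun b i => ⌊y i / η⌋ + if b i then 1 else 0, ?_⟩
    intro q hq
    refine ⟨fun i => decide (q i = ⌊y i / η⌋ + 1), ?_⟩
    funext i
    have h0 := abs_lt.1 (hq i)
    have h1 := Int.floor_le (y i / η)
    have h2 := Int.lt_floor_add_one (y i / η)
    rw [le_div_iff₀ hηp] at h1
    rw [div_lt_iff₀ hηp] at h2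
    have a1 : q i < ⌊y i / η⌋ + 2 := by
      have : (q i : ℝ) < ⌊y i / η⌋ + 2 := by
        by_contra hh
        push Not at hh
        nlinarith
      exact_mod_cast this
    have a2 : ⌊y i / η⌋ < q i + 1 := by
      have : (⌊y i / η⌋ : ℝ) < q i + 1 := by
        by_contra hh
        push Not at hh
        nlinarith
      exact_mod_cast this
    by_cases hh : q i = ⌊y i / η⌋ + 1
    · simp [hh]
    · simp only [hh]
      simp
      omega

lemma Ord_local {n : ℕ} [ChartedSpace (EuclideanSpace ℝ (Fin n)) M]
    (hc : ∀ w : W, Continuous (fun x : M => w +ᵥ x))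
    (hf : ∀ w : W, w ≠ 0 → ∀ x : M, w +ᵥ x ≠ x) (x : M) : ∃ K ∈ 𝓝 x, Ord W (2 ^ n) K := by
  classical
  obtain ⟨A, hA, hxA, hAd⟩ := exists_disj hc hf x
  set e := chartAt (EuclideanSpace ℝ (Fin n)) x with he
  have hxe : x ∈ e.source := mem_chart_source _ x
  have hO : IsOpen (e.target ∩ e.symm ⁻¹' A) := e.isOpen_inter_preimage_symm hA
  obtain ⟨R', hR', hball⟩ := Metric.isOpen_iff.1 hO (e x) ⟨e.map_source hxe, by
    rw [Set.mem_preimage, e.left_inv hxe]; exact hxA⟩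
  set R := R' / 2 with hR
  have hRp : 0 < R := by positivity
  set B := Metric.closedBall (e x) R with hB
  have hBR : B ⊆ Metric.ball (e x) R' := Metric.closedBall_subset_ball (by rw [hR]; linarith)
  have hBc : IsCompact B := isCompact_closedBall _ _
  have hBt : B ⊆ e.target := fun y hy => (hball (hBR hy)).1
  set K0 := e.symm '' B with hK0
  have hK0c : IsCompact K0 := hBc.image_of_continuousOn (e.continuousOn_symm.mono hBt)
  have hK0n : K0 ∈ 𝓝 x := by
    have h1 : e.symm '' Metric.ball (e x) R ⊆ K0 := Set.image_mono Metric.ball_subset_closedBall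
    have h2 : IsOpen (e.symm '' Metric.ball (e x) R) :=
      e.symm.isOpen_image_of_subset_source Metric.isOpen_ball
        (fun y hy => hBt (Metric.ball_subset_closedBall hy))
    have h3 : x ∈ e.symm '' Metric.ball (e x) R := ⟨e x, Metric.mem_ball_self hRp, e.left_inv hxe⟩
    exact Filter.mem_of_superset (h2.mem_nhds h3) h1
  refine ⟨sat W K0, Filter.mem_of_superset hK0n (sat_sub _), ?_⟩
  intro ι _ U hUo hUi hUc
  -- Lebesgue number
  obtain ⟨δ, hδ, hleb⟩ := lebesgue_number_lemma_of_metric (c := fun i : ι =>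
      Metric.ball (e x) R' ∩ (e.target ∩ e.symm ⁻¹' U i)) hBc
    (fun i => Metric.isOpen_ball.inter (e.isOpen_inter_preimage_symm (hUo i))) (by
      intro y hy
      obtain ⟨i, hi⟩ := Set.mem_iUnion.1 (hUc ▸ Set.mem_univ (e.symm y))
      exact Set.mem_iUnion.2 ⟨i, hBR hy, hBt hy, hi⟩)
  obtain ⟨cube, cub1, cub2, cub3, cub4⟩ := cubes (n := n) hδ
  have hfe : ∀ q : Fin n → ℤ, ∃ i : ι, (cube q ∩ B).Nonempty →
      cube q ⊆ Metric.ball (e x) R' ∩ (e.target ∩ e.symm ⁻¹' U i) := by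
    intro q
    by_cases h : (cube q ∩ B).Nonempty
    · obtain ⟨y, hy1, hy2⟩ := h
      obtain ⟨i, hi⟩ := hleb y hy2
      exact ⟨i, fun _ => (cub3 q y hy1).trans hi⟩
    · obtain ⟨i, _⟩ := Set.mem_iUnion.1 (hUc ▸ Set.mem_univ x)
      exact ⟨i, fun h' => (h h').elim⟩
  choose f hf' using hfe
  refine ⟨fun i => (U i \ sat W K0) ∪ ⋃ q : {q : Fin n → ℤ // (cube q ∩ B).Nonempty ∧ f q = i},
    sat W (e.symm '' cube q.1), ?_, ?_, ?_, ?_, ?_⟩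
  · intro i
    refine Set.union_subset Set.sdiff_subset (Set.iUnion_subset ?_)
    rintro ⟨q, hq, rfl⟩
    refine sat_le ?_ (hUi _)
    rintro _ ⟨y, hy, rfl⟩
    exact (hf' q hq hy).2.2
  · intro i
    refine ((hUo i).sdiff (sat_closed hc hK0c.isClosed)).union (isOpen_iUnion ?_)
    rintro ⟨q, hq, rfl⟩
    exact sat_open hc (e.symm.isOpen_image_of_subset_source (cub1 q) (fun y hy => (hf' q hq hy).2.1))
  · intro i w y
    have h1 := hUi i w y
    have h2 := sat_inv K0 w y
    have h3 := fun q : {q : Fin n → ℤ // (cube q ∩ B).Nonempty ∧ f q = i} =>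
      sat_inv (e.symm '' cube q.1) w y
    simp only [Set.mem_union, Set.mem_sdiff, Set.mem_iUnion, h1, h2, h3]
  · refine Set.eq_univ_of_forall fun y => ?_
    by_cases h : y ∈ sat W K0
    · obtain ⟨w, b, hb, hbw⟩ := h
      obtain ⟨q, hq⟩ := cub2 b
      exact Set.mem_iUnion.2 ⟨f q, Or.inr (Set.mem_iUnion.2 ⟨⟨q, ⟨b, hq, hb⟩, rfl⟩, w, b, hq, hbw⟩)⟩
    · obtain ⟨i, hi⟩ := Set.mem_iUnion.1 (hUc ▸ Set.mem_univ y)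
      exact Set.mem_iUnion.2 ⟨i, Or.inl ⟨hi, h⟩⟩
  · rintro y ⟨w, b, hb, hbw⟩
    obtain ⟨g, hg⟩ := cub4 b
    have hsub : {i | y ∈ (U i \ sat W K0) ∪ ⋃ q : {q : Fin n → ℤ // (cube q ∩ B).Nonempty ∧ f q = i},
        sat W (e.symm '' cube q.1)} ⊆ Set.range (fun b => f (g b)) := by
      rintro i (⟨-, h⟩ | h)
      · exact (h ⟨w, b, hb, hbw⟩).elim
      · obtain ⟨⟨q, hq, rfl⟩, w', b', hb', hbw'⟩ := Set.mem_iUnion.1 h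
        have m1 : w +ᵥ y ∈ A := by rw [← hbw]; exact (hball (hBR hb)).2
        have m2 : w' +ᵥ y ∈ A := by rw [← hbw']; exact (hball (hf' q hq hb').1).2
        have e1 : w' - w = 0 := hAd (w' - w) (w +ᵥ y) m1 (by rwa [← add_vadd, sub_add_cancel])
        have e2 : w' = w := sub_eq_zero.1 e1
        subst e2
        have e3 : b = b' := e.symm.injOn (hBt hb) (hf' q hq hb').2.1 (hbw.trans hbw'.symm)
        subst e3
        obtain ⟨β, hβ⟩ := hg q hb'
        exact ⟨β, by simp only [hβ]⟩
    refine (Set.ncard_le_ncard hsub (Set.finite_range _)).trans ?_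
    rw [← Set.image_univ]
    refine (Set.ncard_image_le Set.finite_univ).trans ?_
    rw [Set.ncard_univ]
    simp

lemma Ord_union {r : ℕ} {K L : Set M} (hK : Ord W r K) (hL : Ord W r L) : Ord W r (K ∪ L) := by
  intro ι _ U h1 h2 h3
  obtain ⟨V, a1, a2, a3, a4, a5⟩ := hK ι U h1 h2 h3
  obtain ⟨V', b1, b2, b3, b4, b5⟩ := hL ι V a2 a3 a4
  refine ⟨V', fun i => (b1 i).trans (a1 i), b2, b3, b4, ?_⟩
  rintro x (hx | hx)
  · exact (Set.ncard_le_ncard (fun i hi => b1 i hi) (Set.toFinite _)).trans (a5 x hx)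
  · exact b5 x hx

lemma Ord_univ {n : ℕ} [ChartedSpace (EuclideanSpace ℝ (Fin n)) M] [CompactSpace M]
    (hc : ∀ w : W, Continuous (fun x : M => w +ᵥ x))
    (hf : ∀ w : W, w ≠ 0 → ∀ x : M, w +ᵥ x ≠ x) : Ord W (2 ^ n) (Set.univ : Set M) := by
  refine isCompact_univ.induction_on (p := fun K => Ord W (2 ^ n) K) ?_ ?_ ?_ ?_
  · intro ι _ U h1 h2 h3
    exact ⟨U, fun _ => le_rfl, h1, h2, h3, by simp⟩
  · intro s t hst h ι _ U h1 h2 h3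
    obtain ⟨V, a1, a2, a3, a4, a5⟩ := h ι U h1 h2 h3
    exact ⟨V, a1, a2, a3, a4, fun x hx => a5 x (hst hx)⟩
  · intro s t; exact Ord_union
  · intro x _
    obtain ⟨K, hK, h⟩ := Ord_local (n := n) hc hf x
    exact ⟨K, by rwa [nhdsWithin_univ], h⟩

end top
end FA

namespace FA
open Finsupp
open scoped Topology
section phi
universe u v
variable {W : Type v} [AddCommGroup W] [Finite W] {M : Type u} [MetricSpace M] [AddAction W M]

lemma exists_sigma (hf : ∀ w : W, w ≠ 0 → ∀ x : M, w +ᵥ x ≠ x) :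
    ∃ σ : M → W, ∀ g x, σ (g +ᵥ x) = g + σ x := by
  classical
  let S := AddAction.orbitRel W M
  have h1 : ∀ x : M, ∃ g : W, g +ᵥ (Quotient.mk S x).out = x := by
    intro x
    have h : S.r (Quotient.mk S x).out x := Quotient.mk_out x
    have h' : S.r x (Quotient.mk S x).out := S.symm h
    exact h'
  choose σ hσ using h1
  refine ⟨σ, fun g x => ?_⟩
  have e : Quotient.mk S (g +ᵥ x) = Quotient.mk S x := Quotient.sound ⟨g, rfl⟩
  have h2 := hσ (g +ᵥ x)
  rw [e] at h2
  have h3 := hσ x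
  set o := (Quotient.mk S x).out
  by_contra hne
  apply hf (σ (g +ᵥ x) - (g + σ x)) (sub_ne_zero.2 hne) ((g + σ x) +ᵥ o)
  rw [← add_vadd, sub_add_cancel, h2, add_vadd, h3]

lemma exists_phi_one (hc : ∀ w : W, Continuous (fun x : M => w +ᵥ x))
    (hf : ∀ w : W, w ≠ 0 → ∀ x : M, w +ᵥ x ≠ x) (A : Set M) (hA : IsOpen A) (hd : Disj W A) :
    ∃ φ : M → W, (∀ g x, φ (g +ᵥ x) = g + φ x) ∧
      ∀ x ∈ sat W A, ∀ᶠ y in 𝓝 x, φ y = φ x := by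
  classical
  obtain ⟨σ, hσ⟩ := exists_sigma (W := W) (M := M) hf
  have huniq : ∀ (g h : W) (x : M), g +ᵥ x ∈ A → h +ᵥ x ∈ A → g = h := by
    intro g h x h1 h2
    exact sub_eq_zero.1 (hd (g - h) (h +ᵥ x) h2 (by rwa [← add_vadd, sub_add_cancel]))
  let φ : M → W := fun x => if h : ∃ w : W, w +ᵥ x ∈ A then - h.choose else σ x
  have hφ : ∀ (w : W) (x : M), w +ᵥ x ∈ A → φ x = - w := by
    intro w x hx
    have h : ∃ w : W, w +ᵥ x ∈ A := ⟨w, hx⟩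
    simp only [φ, dif_pos h]
    rw [huniq _ _ x h.choose_spec hx]
  refine ⟨φ, ?_, ?_⟩
  · intro g x
    by_cases h : x ∈ sat W A
    · obtain ⟨w, hw⟩ := h
      rw [hφ w x hw, hφ (w - g) (g +ᵥ x) (by rwa [← add_vadd, sub_add_cancel])]
      abel
    · have h' : g +ᵥ x ∉ sat W A := fun h' => h ((sat_inv A g x).1 h')
      have e1 : φ x = σ x := dif_neg h
      have e2 : φ (g +ᵥ x) = σ (g +ᵥ x) := dif_neg h'
      rw [e1, e2, hσ]
  · rintro x ⟨w, hw⟩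
    have : (fun x : M => w +ᵥ x) ⁻¹' A ∈ 𝓝 x := (hA.preimage (hc w)).mem_nhds hw
    filter_upwards [this] with y hy
    rw [hφ w x hw, hφ w y hy]

/-- Ostrand-type coloring. -/
lemma ostrand {ι : Type u} [Finite ι] [Nonempty ι] (hc : ∀ w : W, Continuous (fun x : M => w +ᵥ x))
    (U : ι → Set M) (hUo : ∀ i, IsOpen (U i)) (hUi : ∀ i, Inv W (U i))
    (hUc : ⋃ i, U i = Set.univ) (r : ℕ) (hr : ∀ x, {i | x ∈ U i}.ncard ≤ r) :
    ∃ c : ℕ → M → ι, (∀ j (w : W) x, c j (w +ᵥ x) = c j x) ∧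
      ∀ x, ∃ j < r, x ∈ U (c j x) ∧ ∀ᶠ y in 𝓝 x, c j y = c j x := by
  classical
  have := Fintype.ofFinite ι
  have := Fintype.ofFinite W
  let f : ι → M → ENNReal := fun i x => ∑ w : W, Metric.infEDist (w +ᵥ x) (U i)ᶜ
  have fcont : ∀ i, Continuous (f i) := fun i =>
    continuous_finsetSum _ fun w _ => Metric.continuous_infEDist.comp (hc w)
  have finv : ∀ i (w : W) x, f i (w +ᵥ x) = f i x := by
    intro i w x
    simp only [f, ← add_vadd]
    exact Fintype.sum_equiv (Equiv.addRight w) _ _ (fun g => rfl)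
  have fpos : ∀ i x, 0 < f i x ↔ x ∈ U i := by
    intro i x
    have h1 : ∀ w : W, Metric.infEDist (w +ᵥ x) (U i)ᶜ = 0 ↔ x ∉ U i := by
      intro w
      rw [← Metric.mem_iff_infEDist_zero_of_closed (hUo i).isClosed_compl, Set.mem_compl_iff,
        hUi i w x]
    rw [pos_iff_ne_zero, ne_eq, Finset.sum_eq_zero_iff]
    simp [h1]
  -- condition
  let cond : Finset ι → M → Prop := fun S x => (∀ l ∈ S, 0 < f l x) ∧ ∀ l ∈ S, ∀ l' ∉ S, f l' x < f l x
  have cinv : ∀ S (w : W) x, cond S (w +ᵥ x) ↔ cond S x := by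
    intro S w x
    simp only [cond, finv]
  have copen : ∀ S x, cond S x → ∀ᶠ y in 𝓝 x, cond S y := by
    intro S x hx
    refine Filter.Eventually.and ?_ ?_
    · rw [Finset.eventually_all]
      intro l hl
      exact (isOpen_lt continuous_const (fcont l)).mem_nhds (hx.1 l hl)
    · rw [Finset.eventually_all]
      intro l hl
      rw [Filter.eventually_all]
      intro l'
      by_cases h : l' ∈ S
      · simp [h]
      · have : ∀ᶠ y in 𝓝 x, f l' y < f l y :=
          (isOpen_lt (fcont l') (fcont l)).mem_nhds (hx.2 l hl l' h)
        filter_upwards [this] with y hy _ using hy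
  have cuniq : ∀ S S' x, S.card = S'.card → cond S x → cond S' x → S = S' := by
    intro S S' x hcard h h'
    by_contra hne
    have n1 : ¬ S ⊆ S' := fun hs => hne (Finset.eq_of_subset_of_card_le hs hcard.ge)
    have n2 : ¬ S' ⊆ S := fun hs => hne (Finset.eq_of_subset_of_card_le hs hcard.le).symm
    obtain ⟨l, hl, hl'⟩ := Finset.not_subset.1 n1
    obtain ⟨m, hm, hm'⟩ := Finset.not_subset.1 n2
    exact lt_asymm (h.2 l hl m hm') (h'.2 m hm l hl')
  let pick : Finset ι → ι := fun S => if h : S.Nonempty then h.choose else Classical.arbitrary ι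
  have hpick : ∀ S : Finset ι, S.Nonempty → pick S ∈ S := by
    intro S h
    simp only [pick, dif_pos h]
    exact h.choose_spec
  let c : ℕ → M → ι := fun j x => if h : ∃ S : Finset ι, S.card = j + 1 ∧ cond S x then pick h.choose
    else Classical.arbitrary ι
  have hcS : ∀ j x (S : Finset ι), S.card = j + 1 → cond S x → c j x = pick S := by
    intro j x S h1 h2
    have h : ∃ S : Finset ι, S.card = j + 1 ∧ cond S x := ⟨S, h1, h2⟩
    simp only [c, dif_pos h]
    rw [cuniq _ S x (h.choose_spec.1.trans h1.symm) h.choose_spec.2 h2]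
  refine ⟨c, ?_, ?_⟩
  · intro j w x
    simp only [c, cinv]
  · intro x
    let S : Finset ι := Finset.univ.filter (fun l => x ∈ U l)
    have hS : cond S x := by
      refine ⟨fun l hl => (fpos l x).2 (by simpa [S] using hl), fun l hl l' hl' => ?_⟩
      have h1 : x ∈ U l := by simpa [S] using hl
      have h2 : x ∉ U l' := by simpa [S] using hl'
      have h3 : f l' x = 0 := by
        by_contra h
        exact h2 ((fpos l' x).1 (pos_iff_ne_zero.2 h))
      rw [h3]
      exact (fpos l x).2 h1
    have hne : S.Nonempty := by
      obtain ⟨i, hi⟩ := Set.mem_iUnion.1 (hUc ▸ Set.mem_univ x)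
      exact ⟨i, by simp [S, hi]⟩
    have hcard : S.card ≤ r := by
      have h := hr x
      rw [show {i | x ∈ U i} = (S : Set ι) by ext; simp [S], Set.ncard_coe_finset] at h
      exact h
    have hpos := hne.card_pos
    refine ⟨S.card - 1, by omega, ?_, ?_⟩
    · rw [hcS _ x S (by omega) hS]
      simpa [S] using hpick S hne
    · filter_upwards [copen S x hS] with y hy
      rw [hcS _ x S (by omega) hS, hcS _ y S (by omega) hy]

theorem exists_phi {n : ℕ} [ChartedSpace (EuclideanSpace ℝ (Fin n)) M] [CompactSpace M] [Nonempty M]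
    (hc : ∀ w : W, Continuous (fun x : M => w +ᵥ x))
    (hf : ∀ w : W, w ≠ 0 → ∀ x : M, w +ᵥ x ≠ x) :
    ∃ φ : ℕ → M → W, (∀ i g x, φ i (g +ᵥ x) = g + φ i x) ∧
      ∃ ε > 0, ∀ x : M, ∃ i < 2 ^ n, ∀ y, dist x y < ε → φ i y = φ i x := by
  classical
  choose A hAo hxA hAd using exists_disj (W := W) (M := M) hc hf
  obtain ⟨t, ht⟩ := isCompact_univ.elim_finite_subcover (fun x : M => A x) hAo
    (fun x _ => Set.mem_iUnion.2 ⟨x, hxA x⟩)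
  have hcov : ⋃ i : t, sat W (A i.1) = Set.univ := by
    refine Set.eq_univ_of_forall fun x => ?_
    obtain ⟨i, hi, hx⟩ := Set.mem_iUnion₂.1 (ht (Set.mem_univ x))
    exact Set.mem_iUnion.2 ⟨⟨i, hi⟩, sat_sub _ hx⟩
  have hne : Nonempty t := by
    obtain ⟨x⟩ := ‹Nonempty M›
    obtain ⟨i, _⟩ := Set.mem_iUnion.1 (hcov ▸ Set.mem_univ x)
    exact ⟨i⟩
  obtain ⟨V, a1, a2, a3, a4, a5⟩ := Ord_univ (n := n) hc hf t (fun i => sat W (A i.1))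
    (fun i => sat_open hc (hAo _)) (fun i => sat_inv _) hcov
  obtain ⟨c, hcinv, hcl⟩ := ostrand hc V a2 a3 a4 (2 ^ n) (fun x => a5 x trivial)
  choose ψ hψ1 hψ2 using fun i : t => exists_phi_one hc hf (A i.1) (hAo _) (hAd _)
  refine ⟨fun j x => ψ (c j x) x, ?_, ?_⟩
  · intro j g x
    simp only [hcinv, hψ1]
  · have hloc : ∀ x : M, ∃ i < 2 ^ n, ∃ N : Set M, IsOpen N ∧ x ∈ N ∧
        ∀ y ∈ N, ψ (c i y) y = ψ (c i x) x := by
      intro x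
      obtain ⟨j, hj, h1, h2⟩ := hcl x
      have h3 := hψ2 (c j x) x (a1 _ h1)
      have h4 : ∀ᶠ y in 𝓝 x, ψ (c j y) y = ψ (c j x) x := by
        filter_upwards [h2, h3] with y e1 e2
        rw [e1, e2]
      obtain ⟨N, hN, hNo, hxN⟩ := eventually_nhds_iff.1 h4
      exact ⟨j, hj, N, hNo, hxN, hN⟩
    choose i hi N hNo hxN hN using hloc
    obtain ⟨ε, hε, h⟩ := lebesgue_number_lemma_of_metric (c := N) isCompact_univ hNo
      (fun x _ => Set.mem_iUnion.2 ⟨x, hxN x⟩)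
    refine ⟨ε, hε, fun x => ?_⟩
    obtain ⟨z, hz⟩ := h x trivial
    refine ⟨i z, hi z, fun y hy => ?_⟩
    change ψ (c (i z) y) y = ψ (c (i z) x) x
    rw [hN z y (hz (by rwa [Metric.mem_ball, dist_comm])), hN z x (hz (Metric.mem_ball_self hε))]

end phi
end FA

/-- **Weinberger's theorem.** For every prime `p` and every nonempty compact
topological manifold `M`, there is `k` such that `(ℤ/pℤ)^k` admits no free action
on `M` by homeomorphisms. -/
theorem no_free_elementary_abelian_action {p : ℕ} (hp : p.Prime) {n : ℕ}
    {M : Type*} [TopologicalSpace M] [T2Space M] [SecondCountableTopology M]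
    [ChartedSpace (EuclideanSpace ℝ (Fin n)) M] [CompactSpace M] [Nonempty M] :
    ∃ k : ℕ, ¬ ∃ ρ : Multiplicative (Fin k → ZMod p) →* (M ≃ₜ M),
      ∀ g : Multiplicative (Fin k → ZMod p), g ≠ 1 → ∀ x : M, ρ g x ≠ x := by
  haveI : Fact p.Prime := ⟨hp⟩
  letI : MetricSpace M := TopologicalSpace.metrizableSpaceMetric M
  haveI : Finite (ZMod p) := Fintype.finite (ZMod.fintype p)
  choose c0 hc0 using FA.base (M := M) (ZMod p) (EuclideanSpace ℝ (Fin n))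
  obtain ⟨k, hk⟩ : ∃ k, ∀ j < 2 ^ n, p ^ j * FA.cc c0 j 1 < p ^ k := by
    refine ⟨∑ j ∈ Finset.range (2 ^ n), p ^ j * FA.cc c0 j 1, fun j hj => ?_⟩
    refine lt_of_le_of_lt ?_ (Nat.lt_pow_self hp.one_lt)
    exact Finset.single_le_sum (f := fun j => p ^ j * FA.cc c0 j 1) (fun _ _ => Nat.zero_le _)
      (Finset.mem_range.2 hj)
  refine ⟨k, ?_⟩
  rintro ⟨ρ, hρ⟩
  letI : AddAction (Fin k → ZMod p) M :=
    { vadd := fun w x => ρ (Multiplicative.ofAdd w) x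
      zero_vadd := fun x => by
        change ρ (Multiplicative.ofAdd 0) x = x
        rw [ofAdd_zero, map_one]
        rfl
      add_vadd := fun g h x => by
        change ρ (Multiplicative.ofAdd (g + h)) x =
          ρ (Multiplicative.ofAdd g) (ρ (Multiplicative.ofAdd h) x)
        rw [ofAdd_add, map_mul]
        rfl }
  have hc : ∀ w : Fin k → ZMod p, Continuous (fun x : M => w +ᵥ x) := fun w =>
    (ρ (Multiplicative.ofAdd w)).continuous
  have hf : ∀ w : Fin k → ZMod p, w ≠ 0 → ∀ x : M, w +ᵥ x ≠ x := fun w hw x =>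
    hρ (Multiplicative.ofAdd w) (fun h => hw (ofAdd_eq_one.1 h)) x
  obtain ⟨φ, hφ, ε, hε, hcst⟩ := FA.exists_phi (n := n) hc hf
  refine FA.mainD (W := Fin k → ZMod p) (p := p) (M := M) c0 ?_ ?_ k ?_ (2 ^ n) hk φ hφ ε hε hcst
  · intro m ε hε
    obtain ⟨δ, hδ, κ, h⟩ := hc0 m ε hε
    exact ⟨δ, hδ, κ, fun z hz z' hz' => h z hz z' hz'⟩
  · intro ε hε
    have : ∀ w : Fin k → ZMod p, ∃ δ > 0, ∀ x y : M, dist x y < δ → dist (w +ᵥ x) (w +ᵥ y) < ε := by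
      intro w
      obtain ⟨δ, hδ, h⟩ := Metric.uniformContinuous_iff.1
        (CompactSpace.uniformContinuous_of_continuous (hc w)) ε hε
      exact ⟨δ, hδ, fun x y hxy => h hxy⟩
    choose δ hδ h using this
    obtain ⟨w0, hw0⟩ := Finite.exists_min δ
    refine ⟨min (δ w0) ε, lt_min (hδ w0) hε, min_le_right _ _, ?_⟩
    intro x y w hxy
    exact h w x y (hxy.trans_le ((min_le_left _ _).trans (hw0 w)))
  · simp [Nat.card_eq_fintype_card, ZMod.card]
end

section
/- Let G be a subgroup of the group of self-homeomorphisms of the circle S¹ such that there exists a natural number N with g^(2^N) = 1 for every g ∈ G. Then G is finite. -/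
namespace CircAux

open Real

theorem le_pow (F : ℝ ≃o ℝ) {x : ℝ} (h : x ≤ F x) (n : ℕ) : x ≤ (F ^ n) x := by
  induction n with
  | zero => simp
  | succ n ih =>
    rw [pow_succ]
    exact ih.trans ((F ^ n).monotone h)

theorem pow_le (F : ℝ ≃o ℝ) {x : ℝ} (h : F x ≤ x) (n : ℕ) : (F ^ n) x ≤ x := by
  induction n with
  | zero => simp
  | succ n ih =>
    rw [pow_succ]
    exact ((F ^ n).monotone h).trans ih

theorem lt_pow (F : ℝ ≃o ℝ) {x : ℝ} (h : x < F x) {n : ℕ} (hn : 0 < n) : x < (F ^ n) x := by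
  obtain ⟨n, rfl⟩ := Nat.exists_eq_succ_of_ne_zero hn.ne'
  rw [pow_succ]
  exact (le_pow F h.le n).trans_lt ((F ^ n).strictMono h)

theorem pow_lt (F : ℝ ≃o ℝ) {x : ℝ} (h : F x < x) {n : ℕ} (hn : 0 < n) : (F ^ n) x < x := by
  obtain ⟨n, rfl⟩ := Nat.exists_eq_succ_of_ne_zero hn.ne'
  rw [pow_succ]
  exact ((F ^ n).strictMono h).trans_le (pow_le F h.le n)

section order
variable (H : Subgroup (ℝ ≃o ℝ)) (M : ℕ)

theorem H_le (hM : 0 < M)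
    (hH : ∀ F ∈ H, ∃ k : ℤ, ∀ x, (F ^ M) x = x + k * (2 * π)) {F : ℝ ≃o ℝ} (hF : F ∈ H)
    {y : ℝ} (hy : y ≤ F y) (x : ℝ) : x ≤ F x := by
  obtain ⟨k, hk⟩ := hH F hF
  by_contra hx
  have h1 := pow_lt F (not_le.1 hx) hM
  have h2 := le_pow F hy M
  rw [hk] at h1 h2
  linarith

theorem H_pos (hM : 0 < M)
    (hH : ∀ F ∈ H, ∃ k : ℤ, ∀ x, (F ^ M) x = x + k * (2 * π)) {F : ℝ ≃o ℝ} (hF : F ∈ H)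
    {y : ℝ} (hy : y < F y) (x : ℝ) : x + 2 * π ≤ (F ^ M) x := by
  obtain ⟨k, hk⟩ := hH F hF
  have h2 := lt_pow F hy hM
  rw [hk] at h2 ⊢
  have h3 : (0 : ℝ) < k := by
    by_contra h
    have := mul_nonneg (neg_nonneg.2 (not_lt.1 h)) two_pi_pos.le
    linarith
  have h4 : (1 : ℝ) ≤ k := by exact_mod_cast h3
  have := mul_le_mul_of_nonneg_right h4 two_pi_pos.le
  linarith

theorem H_le' (hM : 0 < M)
    (hH : ∀ F ∈ H, ∃ k : ℤ, ∀ x, (F ^ M) x = x + k * (2 * π)) {F K : ℝ ≃o ℝ} (hF : F ∈ H)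
    (hK : K ∈ H) {y : ℝ} (hy : F y ≤ K y) (x : ℝ) : F x ≤ K x := by
  have h := H_le H M hM hH (H.mul_mem (H.inv_mem hF) hK) (y := y) (by
    have := (F⁻¹).monotone hy
    rwa [RelIso.inv_apply_self] at this) x
  have := F.monotone h
  rwa [RelIso.mul_apply, RelIso.apply_inv_self] at this

theorem H_fin (hM : 0 < M)
    (hH : ∀ F ∈ H, ∃ k : ℤ, ∀ x, (F ^ M) x = x + k * (2 * π)) :
    {F : ℝ ≃o ℝ | F ∈ H ∧ 0 ≤ F 0 ∧ F 0 < 2 * π}.Finite := by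
  set S := {F : ℝ ≃o ℝ | F ∈ H ∧ 0 ≤ F 0 ∧ F 0 < 2 * π} with hS
  by_contra hinf
  have hinj : Set.InjOn (fun F : ℝ ≃o ℝ => F 0) S := by
    intro F hF K hK h
    ext x
    exact le_antisymm (H_le' H M hM hH hF.1 hK.1 (le_of_eq h) x)
      (H_le' H M hM hH hK.1 hF.1 (le_of_eq h.symm) x)
  have himg : ((fun F : ℝ ≃o ℝ => F 0) '' S).Infinite := Set.Infinite.image hinj hinf
  obtain ⟨t, ht, hc⟩ := himg.exists_subset_card_eq (M + 1)
  let e := t.orderEmbOfFin hc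
  have he : ∀ i, ∃ F ∈ S, F 0 = e i := fun i => ht (t.orderEmbOfFin_mem hc i)
  choose A hA hA0 using he
  have hne : (Finset.univ : Finset (Fin M)).Nonempty := ⟨⟨0, hM⟩, Finset.mem_univ _⟩
  obtain ⟨j, -, hj⟩ := Finset.exists_min_image Finset.univ
    (fun i : Fin M => ((A i.castSucc)⁻¹ * A i.succ) 0) hne
  set g := (A j.castSucc)⁻¹ * A j.succ with hg
  have hgH : g ∈ H := H.mul_mem (H.inv_mem (hA _).1) (hA _).1
  have hgpos : 0 < g 0 := by
    have h1 : A j.castSucc 0 < A j.succ 0 := by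
      rw [hA0, hA0]
      exact e.strictMono Fin.castSucc_lt_succ
    have := (A j.castSucc)⁻¹.strictMono h1
    rwa [RelIso.inv_apply_self] at this
  have step : ∀ (i : Fin M) x, A i.castSucc (g x) ≤ A i.succ x := by
    intro i x
    have h := H_le' H M hM hH hgH (H.mul_mem (H.inv_mem (hA i.castSucc).1) (hA i.succ).1)
      (hj i (Finset.mem_univ _)) x
    have := (A i.castSucc).monotone h
    rwa [RelIso.mul_apply (A i.castSucc)⁻¹ (A i.succ), RelIso.apply_inv_self] at this
  have main : ∀ (n : ℕ) (hn : n < M + 1) x, A 0 ((g ^ n) x) ≤ A ⟨n, hn⟩ x := by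
    intro n
    induction n with
    | zero => intro hn x; simp
    | succ n ih =>
      intro hn x
      rw [pow_succ]
      exact (ih (by omega) (g x)).trans (step ⟨n, by omega⟩ x)
  have h1 := main M (by omega) 0
  have h2 := H_pos H M hM hH hgH hgpos 0
  have h3 := H_le H M hM hH (hA 0).1 (hA 0).2.1 ((g ^ M) 0)
  have h4 := (hA ⟨M, by omega⟩).2.2
  linarith

end order

theorem lift_id (f : ℝ → ℝ) (hf : Continuous f) (h : ∀ x, Circle.exp (f x) = Circle.exp x) :
    ∃ k : ℤ, ∀ x, f x = x + k * (2 * π) := by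
  obtain ⟨k, hk⟩ := Circle.exp_eq_exp.1 (h 0)
  refine ⟨k, fun x => ?_⟩
  have := Circle.isCoveringMap_exp.eq_of_comp_eq (g₁ := f)
    (g₂ := fun x => x + k * (2 * π)) hf (by fun_prop) (by
      funext x
      simp only [Function.comp]
      rw [h]
      exact (Circle.exp_eq_exp.2 ⟨k, rfl⟩).symm) 0 hk
  exact congrFun this x

theorem exists_lift (g : Circle ≃ₜ Circle) :
    ∃ f : ℝ → ℝ, Continuous f ∧ ∀ x, Circle.exp (f x) = g (Circle.exp x) := by
  obtain ⟨e₀, he⟩ := Circle.exp_surjective (g (Circle.exp 0))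
  obtain ⟨F, ⟨-, hF⟩, -⟩ := Circle.isCoveringMap_exp.existsUnique_continuousMap_lifts
    (⟨fun x => g (Circle.exp x), by fun_prop⟩ : C(ℝ, Circle)) 0 e₀ he
  exact ⟨F, F.continuous, fun x => congrFun hF x⟩

theorem exists_lift' (g : Circle ≃ₜ Circle) :
    ∃ f : ℝ → ℝ, Function.Surjective f ∧ (StrictMono f ∨ StrictAnti f) ∧
      ∀ x, Circle.exp (f x) = g (Circle.exp x) := by
  obtain ⟨f, hf, hfg⟩ := exists_lift g
  obtain ⟨h, hh, hhg⟩ := exists_lift g.symm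
  obtain ⟨k, hk⟩ := lift_id (fun x => h (f x)) (by fun_prop) (by simp [hhg, hfg])
  obtain ⟨l, hl⟩ := lift_id (fun x => f (h x)) (by fun_prop) (by simp [hhg, hfg])
  refine ⟨f, fun y => ⟨h (y - l * (2 * π)), by rw [hl]; ring⟩,
    hf.strictMono_of_inj fun x y hxy => ?_, hfg⟩
  have h1 := hk x
  have h2 := hk y
  simp only [hxy] at h1 h2
  linarith

/-- increasing lift -/
def IsLift (F : ℝ ≃o ℝ) (g : Circle ≃ₜ Circle) : Prop :=
  ∀ x, Circle.exp (F x) = g (Circle.exp x)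

theorem IsLift.mul {F K : ℝ ≃o ℝ} {g k : Circle ≃ₜ Circle} (h : IsLift F g) (h' : IsLift K k) :
    IsLift (F * K) (g * k) := by
  intro x
  rw [RelIso.mul_apply, h, h']
  rfl

theorem isLift_one : IsLift 1 1 := fun _ => rfl

theorem IsLift.inv {F : ℝ ≃o ℝ} {g : Circle ≃ₜ Circle} (h : IsLift F g) :
    IsLift F⁻¹ g⁻¹ := by
  intro x
  apply g.injective
  rw [← h, RelIso.apply_inv_self]
  exact (g.apply_symm_apply _).symm

theorem IsLift.pow {F : ℝ ≃o ℝ} {g : Circle ≃ₜ Circle} (h : IsLift F g) (n : ℕ) :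
    IsLift (F ^ n) (g ^ n) := by
  induction n with
  | zero => rw [pow_zero, pow_zero]; exact isLift_one
  | succ n ih => rw [pow_succ, pow_succ]; exact ih.mul h

/-- the group of increasing lifts -/
def liftGroup (G : Subgroup (Circle ≃ₜ Circle)) : Subgroup (ℝ ≃o ℝ) where
  carrier := {F | ∃ g ∈ G, IsLift F g}
  mul_mem' := by
    rintro F K ⟨g, hg, h⟩ ⟨k, hk, h'⟩
    exact ⟨g * k, G.mul_mem hg hk, h.mul h'⟩
  one_mem' := ⟨1, G.one_mem, isLift_one⟩
  inv_mem' := by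
    rintro F ⟨g, hg, h⟩
    exact ⟨g⁻¹, G.inv_mem hg, h.inv⟩

theorem plus_finite (G : Subgroup (Circle ≃ₜ Circle)) (M : ℕ) (hM : 0 < M)
    (hexp : ∀ g ∈ G, g ^ M = 1) : {g | g ∈ G ∧ ∃ F, IsLift F g}.Finite := by
  have hfin := H_fin (liftGroup G) M hM (by
    rintro F ⟨g, hg, h⟩
    refine lift_id _ (F ^ M).continuous fun x => ?_
    rw [h.pow M x, hexp g hg]
    rfl)
  have key : ∀ g : {g | g ∈ G ∧ ∃ F, IsLift F g}, ∃ F : ℝ ≃o ℝ,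
      (F ∈ liftGroup G ∧ 0 ≤ F 0 ∧ F 0 < 2 * π) ∧ IsLift F g.1 := by
    rintro ⟨g, hg, F, hF⟩
    let m : ℤ := ⌊F 0 / (2 * π)⌋
    let K : ℝ ≃o ℝ := F.trans (OrderIso.addRight (-(m * (2 * π))))
    have hKx : ∀ x, K x = F x + -(m * (2 * π)) := fun x => rfl
    have hK : IsLift K g := by
      intro x
      rw [← hF, hKx]
      exact Circle.exp_eq_exp.2 ⟨-m, by push_cast; ring⟩
    refine ⟨K, ⟨⟨g, hg, hK⟩, ?_, ?_⟩, hK⟩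
    · rw [hKx]
      have := (le_div_iff₀ two_pi_pos).1 (Int.floor_le (F 0 / (2 * π)))
      linarith
    · rw [hKx]
      have := (div_lt_iff₀ two_pi_pos).1 (Int.lt_floor_add_one (F 0 / (2 * π)))
      linarith
  choose L hL hL' using key
  have : Finite {F : ℝ ≃o ℝ | F ∈ liftGroup G ∧ 0 ≤ F 0 ∧ F 0 < 2 * π} := hfin
  refine Finite.of_injective
    (β := {F : ℝ ≃o ℝ | F ∈ liftGroup G ∧ 0 ≤ F 0 ∧ F 0 < 2 * π})
    (fun g => ⟨L g, hL g⟩) fun g k hgk => ?_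
  have hgk' : L g = L k := congrArg Subtype.val hgk
  apply Subtype.ext
  apply Homeomorph.ext
  intro z
  obtain ⟨x, rfl⟩ := Circle.exp_surjective z
  rw [← hL' g x, ← hL' k x, hgk']

theorem exists_isLift {f : ℝ → ℝ} {g : Circle ≃ₜ Circle} (hs : Function.Surjective f)
    (hm : StrictMono f) (h : ∀ x, Circle.exp (f x) = g (Circle.exp x)) : ∃ F, IsLift F g :=
  ⟨hm.orderIsoOfSurjective f hs, h⟩

theorem all_finite (G : Subgroup (Circle ≃ₜ Circle)) (M : ℕ) (hM : 0 < M)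
    (hexp : ∀ g ∈ G, g ^ M = 1) : (G : Set (Circle ≃ₜ Circle)).Finite := by
  have hP := plus_finite G M hM hexp
  by_cases hall : ∀ g ∈ G, ∃ F, IsLift F g
  · exact hP.subset fun g hg => ⟨hg, hall g hg⟩
  · push Not at hall
    obtain ⟨a, ha, hna⟩ := hall
    obtain ⟨fa, hsa, hma, hla⟩ := exists_lift' a
    have haa : StrictAnti fa := by
      rcases hma with h | h
      · obtain ⟨F, hF⟩ := exists_isLift hsa h hla
        exact absurd hF (hna F)
      · exact h
    refine (hP.union (hP.preimage (f := fun g => a * g)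
      (fun x _ y _ h => mul_left_cancel h))).subset fun g hg => ?_
    obtain ⟨f, hs, hm, hl⟩ := exists_lift' g
    rcases hm with h | h
    · exact Or.inl ⟨hg, exists_isLift hs h hl⟩
    · refine Or.inr ⟨G.mul_mem ha hg, exists_isLift (hsa.comp hs) (haa.comp h) fun x => ?_⟩
      simp only [Function.comp]
      rw [hla, hl]
      rfl

end CircAux

/-- A subgroup of the homeomorphism group of the circle in which every element `g`
satisfies `g ^ 2 ^ N = 1` for a fixed `N` is finite. -/
theorem circle_homeo_two_group_bounded_exponent_finite
    (G : Subgroup (Circle ≃ₜ Circle)) (N : ℕ)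
    (hexp : ∀ g ∈ G, g ^ 2 ^ N = 1) :
    Finite G := by
  exact (CircAux.all_finite G (2 ^ N) (by positivity) hexp).to_subtype
end
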